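/- arXiv:math/0104241 — 3 statements merged into one kernel-verified Lean document; each statement's English description precedes it below -/
import Mathlib

section
/- Let y : {(i,j,k) ∈ ℤ³ : i+j+k even, k ≥ 0} → F satisfy the octahedron recurrence y_{i,j,k} = (α y_{i+1,j,k−1} y_{i−1,j,k−1} + β y_{i,j+1,k−1} y_{i,j−1,k−1})/y_{i,j,k−2} for k ≥ 2, where the entries with k ∈ {0,1} are independent indeterminates and F is the field of rational functions in them over ℤ[α,β]. Then every y_{i,j,k} is a Laurent polynomial in the initial entries with coefficients in ℤ[α,β]. -/
open MvPolynomial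

/-- Index set for the initial cluster of the octahedron recurrence on the
half-lattice: points (i,j,k) with i+j+k even and k ∈ {0,1}. -/
def OctInit : Type :=
  {p : ℤ × ℤ × ℤ // Even (p.1 + p.2.1 + p.2.2) ∧ (p.2.2 = 0 ∨ p.2.2 = 1)}

/-!
Suppose that the entries `z` up to level `n + 1` are Laurent polynomials. Scaling the initial entry
`z 1 U W` fixes every entry that does not lie weakly to the upper right of `(U, W)`, while the
corner entry `z (k + 1) U W` is affine in the scaling factor, with slope
`α ^ k * z k (U - 1) (W - 1)` up to a unit. By induction on the level, adjacent entries of a level,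
as well as an entry and its lower neighbours, are therefore nonzerodivisors modulo each other.
Modulo the entry of level `n` by which the recurrence divides, the numerator is annihilated by the
product of the four lower neighbours of this entry. So it vanishes, and the division is exact.
-/

section LaurentPolynomial

open scoped LaurentPolynomial nonZeroDivisors

/-- Evaluation of Laurent polynomials at `T = 1`. -/
noncomputable def evalOne (R : Type*) [CommRing R] : R[T;T⁻¹] →+* R :=
  LaurentPolynomial.eval₂ (RingHom.id R) 1

variable {R S : Type*} [CommRing R] [CommRing S]

@[simp]
lemma evalOne_C (r : R) : evalOne R (LaurentPolynomial.C r) = r := by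
  simp [evalOne]

lemma laurentPolynomial_C_injective :
    Function.Injective (LaurentPolynomial.C : R →+* R[T;T⁻¹]) :=
  Function.LeftInverse.injective (g := evalOne R) evalOne_C

@[simp]
lemma evalOne_T (n : ℤ) : evalOne R (LaurentPolynomial.T n) = 1 := by
  simp [evalOne]

@[simp]
lemma mapRingHom_C (f : R →+* S) (r : R) :
    AddMonoidAlgebra.mapRingHom ℤ f (LaurentPolynomial.C r) = LaurentPolynomial.C (f r) :=
  AddMonoidAlgebra.map_single ..

@[simp]
lemma mapRingHom_T (f : R →+* S) (n : ℤ) :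
    AddMonoidAlgebra.mapRingHom ℤ f (LaurentPolynomial.T n) = LaurentPolynomial.T n :=
  (AddMonoidAlgebra.map_single ..).trans (congrArg _ f.map_one)

lemma evalOne_mapRingHom (f : R →+* S) (p : R[T;T⁻¹]) :
    evalOne S (AddMonoidAlgebra.mapRingHom ℤ f p) = f (evalOne R p) := by
  induction p using LaurentPolynomial.induction_on' with
  | add p q hp hq => simp [hp, hq]
  | C_mul_T n r => simp

lemma C_add_C_mul_T_sub_one_mem_nonZeroDivisors {κ : R} (hκ : κ ∈ R⁰) (r : R) :
    LaurentPolynomial.C r + LaurentPolynomial.C κ * (LaurentPolynomial.T 1 - 1) ∈ R[T;T⁻¹]⁰ := by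
  nontriviality R
  have hlinear : Polynomial.C κ * Polynomial.X + Polynomial.C (r - κ) ∈ (Polynomial R)⁰ := by
    apply Polynomial.mem_nonZeroDivisors_of_leadingCoeff
    rwa [Polynomial.leadingCoeff_linear (nonZeroDivisors.ne_zero hκ)]
  have hmap := IsLocalization.map_nonZeroDivisors_le (.powers (Polynomial.X : Polynomial R))
    R[T;T⁻¹] (Submonoid.mem_map_of_mem _ hlinear)
  convert hmap using 1
  simp only [LaurentPolynomial.algebraMap_eq_toLaurent, map_add, map_mul, map_sub,
    Polynomial.toLaurent_C, Polynomial.toLaurent_X]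
  ring

end LaurentPolynomial

section RegularMod

open scoped LaurentPolynomial nonZeroDivisors

variable {R : Type*} [CommRing R] {a b c : R}

/-- `b` is a nonzerodivisor modulo `a`. -/
def IsRegularMod (a b : R) : Prop :=
  Ideal.Quotient.mk (Ideal.span {a}) b ∈ (R ⧸ Ideal.span {a})⁰

lemma isRegularMod_iff_dvd : IsRegularMod a b ↔ ∀ x, a ∣ x * b → a ∣ x := by
  simp only [IsRegularMod, mem_nonZeroDivisors_iff_right, Ideal.Quotient.mk_surjective.forall,
    ← map_mul, Ideal.Quotient.eq_zero_iff_dvd]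

lemma isRegularMod_of_isUnit_left (ha : IsUnit a) (b : R) : IsRegularMod a b :=
  isRegularMod_iff_dvd.2 fun _ _ => ha.dvd

lemma isRegularMod_of_isUnit_right (a : R) (hb : IsUnit b) : IsRegularMod a b :=
  (hb.map _).mem_nonZeroDivisors

namespace IsRegularMod

lemma mul (hb : IsRegularMod a b) (hc : IsRegularMod a c) : IsRegularMod a (b * c) := by
  rw [IsRegularMod, map_mul]
  exact mul_mem hb hc

lemma pow (hb : IsRegularMod a b) (n : ℕ) : IsRegularMod a (b ^ n) := by
  rw [IsRegularMod, map_pow]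
  exact pow_mem hb n

lemma of_mul_eq_add {s t : R} (ht : IsRegularMod a t) (hs : a ∣ s) (h : b * c = s + t) :
    IsRegularMod a b := by
  have hmod := congrArg (Ideal.Quotient.mk (Ideal.span {a})) h
  rw [map_add, (Ideal.Quotient.eq_zero_iff_dvd a s).2 hs, zero_add, map_mul] at hmod
  rw [IsRegularMod, ← hmod] at ht
  exact (mul_mem_nonZeroDivisors.1 ht).1

lemma symm [IsDomain R] (h : IsRegularMod a b) (ha : a ≠ 0) : IsRegularMod b a := by
  refine isRegularMod_iff_dvd.2 fun x ⟨y, hy⟩ => ?_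
  obtain ⟨z, rfl⟩ := isRegularMod_iff_dvd.1 h y ⟨x, by linear_combination -hy⟩
  exact ⟨z, mul_left_cancel₀ ha (by linear_combination hy)⟩

lemma ne_zero (h : IsRegularMod a b) (ha : ¬IsUnit a) : b ≠ 0 := by
  rintro rfl
  exact ha (isUnit_of_dvd_one (isRegularMod_iff_dvd.1 h 1 (by simp)))

/-- Modulo `a`, the deformed `b` is affine in `T` with regular slope, hence a nonzerodivisor, and
evaluation at `T = 1` transports this back to `b`. -/
lemma of_deformation {κ : R} {φ : R →+* R[T;T⁻¹]} (hφ : Function.LeftInverse (evalOne R) φ)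
    (ha : φ a = LaurentPolynomial.C a)
    (hb : φ b = LaurentPolynomial.C b + LaurentPolynomial.C κ * (LaurentPolynomial.T 1 - 1))
    (h : IsRegularMod a κ) : IsRegularMod a b := by
  refine isRegularMod_iff_dvd.2 fun x ⟨y, hy⟩ => ?_
  let π := Ideal.Quotient.mk (Ideal.span {a})
  have hπa : π a = 0 := (Ideal.Quotient.eq_zero_iff_dvd a a).2 dvd_rfl
  have hzero : AddMonoidAlgebra.mapRingHom ℤ π (φ x) * (LaurentPolynomial.C (π b) +
      LaurentPolynomial.C (π κ) * (LaurentPolynomial.T 1 - 1)) = 0 := by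
    have hdef := congrArg (fun r => AddMonoidAlgebra.mapRingHom ℤ π (φ r)) hy
    simpa [ha, hb, hπa] using hdef
  have hx : AddMonoidAlgebra.mapRingHom ℤ π (φ x) = 0 :=
    mem_nonZeroDivisors_iff_right.1 (C_add_C_mul_T_sub_one_mem_nonZeroDivisors h (π b)) _ hzero
  rw [← Ideal.Quotient.eq_zero_iff_dvd]
  calc π x = evalOne _ (AddMonoidAlgebra.mapRingHom ℤ π (φ x)) := by rw [evalOne_mapRingHom, hφ x]
    _ = 0 := by rw [hx, map_zero]

end IsRegularMod

end RegularMod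

section Octahedron

open scoped LaurentPolynomial

/-- The numerator of the octahedron recurrence with parameters `a`, `b`. On level `k`, the
coordinates `u = (i + j + k) / 2` and `w = (i - j + k) / 2` replace `(i, j)`. The neighbours
`(i + 1, j)`, `(i - 1, j)`, `(i, j + 1)`, `(i, j - 1)` on level `k - 1` become `(u, w)`,
`(u - 1, w - 1)`, `(u, w - 1)`, `(u - 1, w)`, and `(i, j)` on level `k - 2` becomes
`(u - 1, w - 1)`. -/
def octNumerator {R : Type*} [CommRing R] (a b : R) (f : ℤ → ℤ → R) (u w : ℤ) : R :=
  a * f u w * f (u - 1) (w - 1) + b * f u (w - 1) * f (u - 1) w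

/-- The array `z`, indexed by the level and the coordinates of `octNumerator`, satisfies the
octahedron recurrence up to level `n`. -/
def IsOctahedralUpTo {R : Type*} [CommRing R] (a b : R) (z : ℕ → ℤ → ℤ → R) (n : ℕ) : Prop :=
  ∀ k, k + 2 ≤ n → ∀ u w, z (k + 2) u w * z k (u - 1) (w - 1) = octNumerator a b (z (k + 1)) u w

/-- The ring homomorphism `φ` multiplies `z 1 U W` by a new variable `T`, and fixes the
parameters, level `0` and all entries of level `1` that do not lie weakly to the upper right of
`(U, W)`. -/
structure IsCornerDilation {R : Type*} [CommRing R] (a b : R) (z : ℕ → ℤ → ℤ → R) (U W : ℤ)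
    (φ : R →+* R[T;T⁻¹]) : Prop where
  leftInverse : Function.LeftInverse (evalOne R) φ
  map_left : φ a = LaurentPolynomial.C a
  map_right : φ b = LaurentPolynomial.C b
  map_level_zero : ∀ u w, φ (z 0 u w) = LaurentPolynomial.C (z 0 u w)
  map_level_one : ∀ u w, u < U ∨ w < W → φ (z 1 u w) = LaurentPolynomial.C (z 1 u w)
  map_corner : φ (z 1 U W) = LaurentPolynomial.C (z 1 U W) * LaurentPolynomial.T 1

/-- A solution of the octahedron recurrence up to level `n` whose initial entries are units that
can be scaled independently of each other and of the parameters. -/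
structure IsGenericOctahedral {R : Type*} [CommRing R] (a b : R) (z : ℕ → ℤ → ℤ → R) (n : ℕ) :
    Prop where
  left_ne_zero : a ≠ 0
  not_isUnit_left : ¬IsUnit a
  isRegularMod : IsRegularMod a b
  isUnit_level_zero : ∀ u w, IsUnit (z 0 u w)
  isUnit_level_one : ∀ u w, IsUnit (z 1 u w)
  exists_dilation : ∀ U W, ∃ φ, IsCornerDilation a b z U W φ
  isOctahedral : IsOctahedralUpTo a b z n

variable {R : Type*} [CommRing R] {a b : R} {z : ℕ → ℤ → ℤ → R} {n : ℕ}

lemma IsOctahedralUpTo.map_eq {F : Type*} [Field F] (φ : R →+* F)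
    (hz : ∀ n, IsOctahedralUpTo a b z n) {v : ℕ → ℤ → ℤ → F}
    (h₀ : ∀ u w, φ (z 0 u w) = v 0 u w) (h₁ : ∀ u w, φ (z 1 u w) = v 1 u w)
    (hv : ∀ k u w, v (k + 2) u w = octNumerator (φ a) (φ b) (v (k + 1)) u w / v k (u - 1) (w - 1))
    (hne : ∀ k u w, φ (z k u w) ≠ 0 ∨ v k u w ≠ 0) (k : ℕ) :
    ∀ u w, φ (z k u w) = v k u w := by
  induction k using Nat.twoStepInduction with
  | zero => exact h₀
  | one => exact h₁
  | more k ih₀ ih₁ =>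
    intro u w
    have hden : v k (u - 1) (w - 1) ≠ 0 := by simpa [ih₀] using hne k (u - 1) (w - 1)
    rw [hv, eq_div_iff hden, ← ih₀, ← map_mul, hz _ k le_rfl]
    simp only [octNumerator, map_add, map_mul, ih₁]

lemma exchange_mul_eq_zero {x₁ x₂ x₃ x₄ t₁ t₂ t₃ t₄ p q r s : R}
    (hx : a * x₁ * x₂ + b * x₃ * x₄ = 0) (h₁ : t₁ * x₁ = b * p * q) (h₂ : t₂ * x₂ = b * r * s)
    (h₃ : t₃ * x₃ = a * p * r) (h₄ : t₄ * x₄ = a * q * s) :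
    (a * t₁ * t₂ + b * t₃ * t₄) * (x₁ * x₂ * x₃ * x₄) = 0 := by
  calc (a * t₁ * t₂ + b * t₃ * t₄) * (x₁ * x₂ * x₃ * x₄)
      = a * x₃ * x₄ * (t₁ * x₁) * (t₂ * x₂) + b * x₁ * x₂ * (t₃ * x₃) * (t₄ * x₄) := by ring
    _ = a * b * p * q * r * s * (a * x₁ * x₂ + b * x₃ * x₄) := by rw [h₁, h₂, h₃, h₄]; ring
    _ = 0 := by rw [hx, mul_zero]

lemma IsOctahedralUpTo.dvd_octNumerator_mul {m : ℕ} (hz : IsOctahedralUpTo a b z (m + 3))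
    (u w : ℤ) :
    z (m + 2) u w ∣ octNumerator a b (z (m + 3)) (u + 1) (w + 1) *
      (z (m + 1) u w * z (m + 1) (u - 1) (w - 1) * z (m + 1) u (w - 1) * z (m + 1) (u - 1) w) := by
  have hcenter := hz m (by omega) u w
  have hne := hz (m + 1) le_rfl (u + 1) (w + 1)
  have hsw := hz (m + 1) le_rfl u w
  have hse := hz (m + 1) le_rfl (u + 1) w
  have hnw := hz (m + 1) le_rfl u (w + 1)
  simp only [octNumerator, add_sub_cancel_right, add_assoc, Nat.reduceAdd]
    at hcenter hne hsw hse hnw ⊢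
  rw [← Ideal.Quotient.eq_zero_iff_dvd]
  let π := Ideal.Quotient.mk (Ideal.span {z (m + 2) u w})
  have hπ : π (z (m + 2) u w) = 0 := (Ideal.Quotient.eq_zero_iff_dvd _ _).2 dvd_rfl
  apply_fun π at hcenter hne hsw hse hnw
  change π _ = 0
  simp only [map_add, map_mul, hπ, zero_mul, mul_zero, zero_add, add_zero]
    at hcenter hne hsw hse hnw ⊢
  exact exchange_mul_eq_zero hcenter.symm hne hsw hse hnw

namespace IsGenericOctahedral

lemma isRegularMod_left_entry (hz : IsGenericOctahedral a b z n) :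
    ∀ k ≤ n, ∀ u w, IsRegularMod a (z k u w) := by
  intro k
  induction k using Nat.twoStepInduction with
  | zero => exact fun _ u w => isRegularMod_of_isUnit_right a (hz.isUnit_level_zero u w)
  | one => exact fun _ u w => isRegularMod_of_isUnit_right a (hz.isUnit_level_one u w)
  | more k _ ih =>
    intro hk u w
    have hb := (hz.isRegularMod.mul (ih (by omega) u (w - 1))).mul (ih (by omega) (u - 1) w)
    exact hb.of_mul_eq_add (by simp only [mul_assoc, dvd_mul_right]) (hz.isOctahedral k hk u w)

lemma entry_ne_zero (hz : IsGenericOctahedral a b z n) {k : ℕ} (hk : k ≤ n) (u w : ℤ) :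
    z k u w ≠ 0 :=
  (hz.isRegularMod_left_entry k hk u w).ne_zero hz.not_isUnit_left

variable [IsDomain R]

lemma isRegularMod_right_entry (hz : IsGenericOctahedral a b z n) :
    ∀ k ≤ n, ∀ u w, IsRegularMod b (z k u w) := by
  intro k
  induction k using Nat.twoStepInduction with
  | zero => exact fun _ u w => isRegularMod_of_isUnit_right b (hz.isUnit_level_zero u w)
  | one => exact fun _ u w => isRegularMod_of_isUnit_right b (hz.isUnit_level_one u w)
  | more k _ ih =>
    intro hk u w
    have ha := ((hz.isRegularMod.symm hz.left_ne_zero).mul (ih (by omega) u w)).mul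
      (ih (by omega) (u - 1) (w - 1))
    exact ha.of_mul_eq_add (by simp only [mul_assoc, dvd_mul_right])
      ((hz.isOctahedral k hk u w).trans (add_comm _ _))

lemma isRegularMod_entry_left (hz : IsGenericOctahedral a b z n) {k : ℕ} (hk : k ≤ n) (u w : ℤ) :
    IsRegularMod (z k u w) a :=
  (hz.isRegularMod_left_entry k hk u w).symm hz.left_ne_zero

lemma isRegularMod_entry_right (hz : IsGenericOctahedral a b z n) {k : ℕ} (hk : k ≤ n) (u w : ℤ) :
    IsRegularMod (z k u w) b :=
  (hz.isRegularMod_right_entry k hk u w).symm (hz.isRegularMod.ne_zero hz.not_isUnit_left)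

variable {U W : ℤ} {φ : R →+* R[T;T⁻¹]}

lemma dilation_apply_of_lt (hz : IsGenericOctahedral a b z n) (hφ : IsCornerDilation a b z U W φ) :
    ∀ k ≤ n, ∀ u w, u < U ∨ w < W → φ (z k u w) = LaurentPolynomial.C (z k u w) := by
  intro k
  induction k using Nat.twoStepInduction with
  | zero => exact fun _ u w _ => hφ.map_level_zero u w
  | one => exact fun _ u w h => hφ.map_level_one u w h
  | more k ih₀ ih₁ =>
    intro hk u w h
    have hrec := hz.isOctahedral k hk u w
    have hC : LaurentPolynomial.C (z k (u - 1) (w - 1)) ≠ 0 :=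
      (map_ne_zero_iff _ laurentPolynomial_C_injective).2 (hz.entry_ne_zero (by omega) _ _)
    apply mul_right_cancel₀ hC
    calc φ (z (k + 2) u w) * LaurentPolynomial.C (z k (u - 1) (w - 1))
        = φ (octNumerator a b (z (k + 1)) u w) := by
          rw [← ih₀ (by omega) _ _ (by omega), ← map_mul, hrec]
      _ = LaurentPolynomial.C (octNumerator a b (z (k + 1)) u w) := by
          have hk' : k + 1 ≤ n := by omega
          simp only [octNumerator, map_add, map_mul, hφ.map_left, hφ.map_right]
          rw [ih₁ hk' u w h, ih₁ hk' (u - 1) (w - 1) (by omega), ih₁ hk' u (w - 1) (by omega),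
            ih₁ hk' (u - 1) w (by omega)]
      _ = _ := by rw [← hrec, map_mul]

/-- By `dilation_apply_of_lt`, only the factor `z (k + 1) U W` of the numerator at `(U, W)` is
affected by the dilation. -/
lemma exists_dilation_apply_corner (hz : IsGenericOctahedral a b z n)
    (hφ : IsCornerDilation a b z U W φ) :
    ∃ ε, IsUnit ε ∧ ∀ k, k + 1 ≤ n → φ (z (k + 1) U W) = LaurentPolynomial.C (z (k + 1) U W) +
      LaurentPolynomial.C (ε * a ^ k * z k (U - 1) (W - 1)) * (LaurentPolynomial.T 1 - 1) := by
  obtain ⟨e, he⟩ := hz.isUnit_level_zero (U - 1) (W - 1)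
  refine ⟨z 1 U W * ↑e⁻¹, (hz.isUnit_level_one U W).mul e⁻¹.isUnit, fun k => ?_⟩
  induction k with
  | zero =>
    intro _
    rw [pow_zero, mul_one, ← he, e.inv_mul_cancel_right, hφ.map_corner]
    ring
  | succ k ih =>
    intro hk
    have hfix := hz.dilation_apply_of_lt hφ
    have hrec := hz.isOctahedral k hk U W
    have hC : LaurentPolynomial.C (z k (U - 1) (W - 1)) ≠ 0 :=
      (map_ne_zero_iff _ laurentPolynomial_C_injective).2 (hz.entry_ne_zero (by omega) _ _)
    have hφrec := congrArg φ hrec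
    have hCrec := congrArg LaurentPolynomial.C hrec
    apply mul_right_cancel₀ hC
    simp only [octNumerator, map_add, map_mul, map_pow, hφ.map_left, hφ.map_right, ih (by omega),
      hfix k (by omega) (U - 1) (W - 1) (by omega),
      hfix (k + 1) (by omega) (U - 1) (W - 1) (by omega),
      hfix (k + 1) (by omega) U (W - 1) (by omega),
      hfix (k + 1) (by omega) (U - 1) W (by omega)] at hφrec hCrec ⊢
    linear_combination hφrec - hCrec

lemma isRegularMod_corner (hz : IsGenericOctahedral a b z n) {k : ℕ} (hk : k + 1 ≤ n) {u w : ℤ}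
    (hlt : u < U ∨ w < W) (h : IsRegularMod (z (k + 1) u w) (z k (U - 1) (W - 1))) :
    IsRegularMod (z (k + 1) u w) (z (k + 1) U W) := by
  obtain ⟨φ, hφ⟩ := hz.exists_dilation U W
  obtain ⟨ε, hε, hcorner⟩ := hz.exists_dilation_apply_corner hφ
  have hslope := ((isRegularMod_of_isUnit_right _ hε).mul
    ((hz.isRegularMod_entry_left hk u w).pow k)).mul h
  exact hslope.of_deformation hφ.leftInverse (hz.dilation_apply_of_lt hφ _ hk u w hlt)
    (hcorner k hk)

lemma isRegularMod_below (hz : IsGenericOctahedral a b z n) :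
    ∀ k, k + 1 ≤ n → ∀ u w u' w', (u' = u ∨ u' = u - 1) → (w' = w ∨ w' = w - 1) →
      IsRegularMod (z (k + 1) u w) (z k u' w') := by
  intro k
  induction k with
  | zero => exact fun _ u w _ _ _ _ => isRegularMod_of_isUnit_left (hz.isUnit_level_one u w) _
  | succ k ih =>
    intro hk u w u' w' hu hw
    have hk' : k + 1 ≤ n := by omega
    have hright (u w : ℤ) : IsRegularMod (z (k + 1) (u - 1) w) (z (k + 1) u w) :=
      hz.isRegularMod_corner hk' (by omega) (ih hk' _ _ _ _ (.inl rfl) (.inr rfl))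
    have hup (u w : ℤ) : IsRegularMod (z (k + 1) u (w - 1)) (z (k + 1) u w) :=
      hz.isRegularMod_corner hk' (by omega) (ih hk' _ _ _ _ (.inr rfl) (.inl rfl))
    have hleft (u w : ℤ) := (hright u w).symm (hz.entry_ne_zero hk' _ _)
    have hdown (u w : ℤ) := (hup u w).symm (hz.entry_ne_zero hk' _ _)
    have ha (u w : ℤ) := hz.isRegularMod_entry_left hk' u w
    have hb (u w : ℤ) := hz.isRegularMod_entry_right hk' u w
    have hrec := hz.isOctahedral k hk u w
    have hrec' := hrec.trans (add_comm _ _)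
    -- Modulo a lower neighbour, one term of the numerator vanishes and the other is regular.
    refine IsRegularMod.symm ?_ (hz.entry_ne_zero hk' _ _)
    rcases hu with rfl | rfl <;> rcases hw with rfl | rfl
    · exact (((hb _ _).mul (hdown _ _)).mul (hleft _ _)).of_mul_eq_add
        (by simp only [mul_assoc, mul_left_comm a, dvd_mul_right]) hrec
    · exact (((ha _ _).mul (hup _ _)).mul (hleft _ _)).of_mul_eq_add
        (by simp only [mul_assoc, mul_left_comm b, dvd_mul_right]) hrec'
    · exact (((ha _ _).mul (hright _ _)).mul (hdown _ _)).of_mul_eq_add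
        (Dvd.intro_left _ rfl) hrec'
    · exact (((hb _ _).mul (hright _ _)).mul (hup _ _)).of_mul_eq_add
        (Dvd.intro_left _ rfl) hrec

lemma dvd_octNumerator (hz : IsGenericOctahedral a b z (n + 1)) (u w : ℤ) :
    z n (u - 1) (w - 1) ∣ octNumerator a b (z (n + 1)) u w := by
  match n, hz with
  | 0, hz => exact (hz.isUnit_level_zero _ _).dvd
  | 1, hz => exact (hz.isUnit_level_one _ _).dvd
  | m + 2, hz =>
    have hreg := hz.isRegularMod_below (m + 1) (by omega) (u - 1) (w - 1)
    have hdvd := hz.isOctahedral.dvd_octNumerator_mul (u - 1) (w - 1)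
    rw [sub_add_cancel, sub_add_cancel] at hdvd
    have hbelow := (((hreg _ _ (.inl rfl) (.inl rfl)).mul (hreg _ _ (.inr rfl) (.inr rfl))).mul
      (hreg _ _ (.inl rfl) (.inr rfl))).mul (hreg _ _ (.inr rfl) (.inl rfl))
    exact isRegularMod_iff_dvd.1 hbelow _ hdvd

end IsGenericOctahedral

end Octahedron

section LaurentRing

open scoped LaurentPolynomial

/-- The monomials in the variables indexed by `σ`. -/
noncomputable def leftMonomials (σ τ : Type*) : Submonoid (MvPolynomial (σ ⊕ τ) ℤ) :=
  Submonoid.closure (Set.range fun s => X (Sum.inl s))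

lemma leftMonomials_le_iff {σ τ : Type*} {M : Submonoid (MvPolynomial (σ ⊕ τ) ℤ)} :
    leftMonomials σ τ ≤ M ↔ ∀ s, X (Sum.inl s) ∈ M := by
  rw [leftMonomials, Submonoid.closure_le, Set.range_subset_iff]
  rfl

lemma leftMonomials_le_nonZeroDivisors (σ τ : Type*) :
    leftMonomials σ τ ≤ nonZeroDivisors (MvPolynomial (σ ⊕ τ) ℤ) :=
  leftMonomials_le_iff.2 fun _ => mem_nonZeroDivisors_of_ne_zero (X_ne_zero _)

/-- The ring of Laurent polynomials over `ℤ` in the variables `Sum.inl s`, `s : σ`, with polynomial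
dependence on the further variables `Sum.inr t`, `t : τ`. -/
abbrev LaurentRing (σ τ : Type*) : Type _ :=
  Localization (leftMonomials σ τ)

namespace LaurentRing

variable {σ τ : Type*}

/-- The variables of `LaurentRing σ τ`. -/
noncomputable def var (v : σ ⊕ τ) : LaurentRing σ τ :=
  algebraMap (MvPolynomial (σ ⊕ τ) ℤ) _ (X v)

lemma isUnit_var_inl (s : σ) : IsUnit (var (Sum.inl s) : LaurentRing σ τ) :=
  IsLocalization.map_units _ ⟨X (Sum.inl s), leftMonomials_le_iff.1 le_rfl s⟩

instance : IsDomain (LaurentRing σ τ) :=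
  IsLocalization.isDomain_localization (leftMonomials_le_nonZeroDivisors σ τ)

section lift

variable {A : Type*} [CommRing A] (f : σ ⊕ τ → A) (hf : ∀ s, IsUnit (f (Sum.inl s)))

include hf in
lemma isUnit_aeval (p : leftMonomials σ τ) : IsUnit ((aeval f).toRingHom (p : MvPolynomial _ ℤ)) :=
  leftMonomials_le_iff (M := (IsUnit.submonoid A).comap (aeval f).toRingHom).2
    (fun s => by simpa [IsUnit.mem_submonoid_iff] using hf s) p.2

/-- Substitution of the values `f` for the variables, invertible ones for those in `σ`. -/
noncomputable def lift : LaurentRing σ τ →+* A :=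
  IsLocalization.lift (isUnit_aeval f hf)

@[simp]
lemma lift_var (v : σ ⊕ τ) : lift f hf (var v) = f v := by
  simp [lift, var]

lemma lift_injective (hind : AlgebraicIndependent ℤ f) : Function.Injective (lift f hf) := by
  refine (IsLocalization.lift_injective_iff _).2 fun p q => ?_
  rw [(IsLocalization.injective _ (leftMonomials_le_nonZeroDivisors σ τ)).eq_iff]
  exact hind.eq_iff.symm

end lift

lemma hom_ext {A : Type*} [CommRing A] {φ ψ : LaurentRing σ τ →+* A}
    (h : ∀ v, φ (var v) = ψ (var v)) : φ = ψ := by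
  refine IsLocalization.ringHom_ext (leftMonomials σ τ) ?_
  exact MvPolynomial.ringHom_ext (fun n => by simp) h

lemma lift_mem {F : Type*} [Field F] {f : σ ⊕ τ → F} (hf : ∀ s, IsUnit (f (Sum.inl s)))
    {B : Subalgebra ℤ F} (hB : ∀ v, f v ∈ B) (hinv : ∀ s, (f (Sum.inl s))⁻¹ ∈ B)
    (p : LaurentRing σ τ) : lift f hf p ∈ B := by
  have hunit (s : σ) : IsUnit (⟨f (Sum.inl s), hB _⟩ : B) :=
    IsUnit.of_mul_eq_one ⟨_, hinv s⟩ (Subtype.ext (mul_inv_cancel₀ (hf s).ne_zero))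
  have hcomp : B.val.toRingHom.comp (lift (fun v => ⟨f v, hB v⟩) hunit) = lift f hf :=
    hom_ext fun v => by simp
  exact hcomp ▸ (lift (fun v => (⟨f v, hB v⟩ : B)) hunit p).2

lemma exists_deformation (v₀ : σ ⊕ τ) {q : (LaurentRing σ τ)[T;T⁻¹]} (hq : evalOne _ q = var v₀)
    (hunit : ∀ s, v₀ = Sum.inl s → IsUnit q) :
    ∃ φ : LaurentRing σ τ →+* (LaurentRing σ τ)[T;T⁻¹], Function.LeftInverse (evalOne _) φ ∧
      φ (var v₀) = q ∧ ∀ v ≠ v₀, φ (var v) = LaurentPolynomial.C (var v) := by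
  classical
  let f : σ ⊕ τ → (LaurentRing σ τ)[T;T⁻¹] :=
    Function.update (fun v => LaurentPolynomial.C (var v)) v₀ q
  have hf₀ : f v₀ = q := Function.update_self ..
  have hf (v) (hv : v ≠ v₀) : f v = LaurentPolynomial.C (var v) := Function.update_of_ne hv ..
  have hfunit (s : σ) : IsUnit (f (Sum.inl s)) := by
    by_cases hs : Sum.inl s = v₀
    · rw [hs, hf₀]
      exact hunit s hs.symm
    · rw [hf _ hs]
      exact (isUnit_var_inl s).map _
  have hretract : (evalOne _).comp (lift f hfunit) = RingHom.id _ := by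
    refine hom_ext fun v => ?_
    by_cases hv : v = v₀
    · simp [hv, hf₀, hq]
    · simp [hf v hv]
  exact ⟨lift f hfunit, RingHom.congr_fun hretract, by rw [lift_var, hf₀],
    fun v hv => by rw [lift_var, hf v hv]⟩

lemma isRegularMod_var_inr (v : σ ⊕ τ) {t : τ} (hv : v ≠ Sum.inr t) :
    IsRegularMod (var v : LaurentRing σ τ) (var (Sum.inr t)) := by
  obtain ⟨φ, hφ, hvar, hfix⟩ := exists_deformation (Sum.inr t : σ ⊕ τ)
    (q := LaurentPolynomial.C (var (Sum.inr t)) +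
      LaurentPolynomial.C 1 * (LaurentPolynomial.T 1 - 1))
    (by simp) (by simp)
  exact (isRegularMod_of_isUnit_right _ isUnit_one).of_deformation hφ (hfix v hv) hvar

lemma not_isUnit_var_inr (t : τ) : ¬IsUnit (var (Sum.inr t) : LaurentRing σ τ) := by
  intro h
  let φ : LaurentRing σ τ →+* ℤ :=
    lift (Sum.elim (fun _ => 1) (fun _ => 0)) (fun _ => isUnit_one)
  have hzero : φ (var (Sum.inr t)) = 0 := lift_var ..
  exact not_isUnit_zero (hzero ▸ h.map φ)

end LaurentRing

end LaurentRing

section OctEntry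

open LaurentRing

/-- The initial point of level `0` with the coordinates `u`, `w` of `octNumerator`. -/
def OctInit.level0 (u w : ℤ) : OctInit :=
  ⟨(u + w, u - w, 0), ⟨u, by ring⟩, .inl rfl⟩

/-- The initial point of level `1` with the coordinates `u`, `w` of `octNumerator`. -/
def OctInit.level1 (u w : ℤ) : OctInit :=
  ⟨(u + w - 1, u - w, 1), ⟨u, by ring⟩, .inr rfl⟩

lemma OctInit.level0_ne_level1 (u w u' w' : ℤ) : level0 u w ≠ level1 u' w' := fun h => by
  simpa [level0, level1] using congrArg (fun p : OctInit => p.1.2.2) h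

lemma OctInit.eq_of_level1_eq {u w u' w' : ℤ} (h : level1 u w = level1 u' w') :
    u = u' ∧ w = w' := by
  have hadd : u + w - 1 = u' + w' - 1 := congrArg (fun p : OctInit => p.1.1) h
  have hsub : u - w = u' - w' := congrArg (fun p : OctInit => p.1.2.1) h
  omega

open Classical in
/-- The entries of the octahedron recurrence as Laurent polynomials. The junk value `0` for an
inexact division is never taken, see `isOctahedralUpTo_octEntry`. -/
noncomputable def octEntry : ℕ → ℤ → ℤ → LaurentRing OctInit (Fin 2)
  | 0, u, w => var (Sum.inl (OctInit.level0 u w))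
  | 1, u, w => var (Sum.inl (OctInit.level1 u w))
  | k + 2, u, w =>
    if h : octEntry k (u - 1) (w - 1) ∣
        octNumerator (var (Sum.inr 0)) (var (Sum.inr 1)) (octEntry (k + 1)) u w
    then h.choose else 0

lemma exists_isCornerDilation_octEntry (U W : ℤ) :
    ∃ φ, IsCornerDilation (var (Sum.inr 0)) (var (Sum.inr 1)) octEntry U W φ := by
  obtain ⟨φ, hφ, hcorner, hfix⟩ := exists_deformation (Sum.inl (OctInit.level1 U W))
    (q := LaurentPolynomial.C (var (Sum.inl (OctInit.level1 U W)) : LaurentRing OctInit (Fin 2)) *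
      LaurentPolynomial.T 1)
    (by simp)
    (fun _ _ => ((isUnit_var_inl _).map _).mul (LaurentPolynomial.isUnit_T 1))
  refine ⟨φ, hφ, hfix _ Sum.inr_ne_inl, hfix _ Sum.inr_ne_inl, fun u w => ?_, fun u w h => ?_, ?_⟩
  · rw [octEntry]
    exact hfix _ (Sum.inl_injective.ne (OctInit.level0_ne_level1 u w U W))
  · rw [octEntry]
    refine hfix _ (Sum.inl_injective.ne fun heq => ?_)
    have := OctInit.eq_of_level1_eq heq
    omega
  · rw [octEntry]
    exact hcorner

lemma isGenericOctahedral_octEntry {n : ℕ}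
    (h : IsOctahedralUpTo (var (Sum.inr 0)) (var (Sum.inr 1)) octEntry n) :
    IsGenericOctahedral (var (Sum.inr 0)) (var (Sum.inr 1)) octEntry n where
  left_ne_zero := (isRegularMod_var_inr (Sum.inr 1) (by simp)).ne_zero (not_isUnit_var_inr 1)
  not_isUnit_left := not_isUnit_var_inr 0
  isRegularMod := isRegularMod_var_inr _ (by simp)
  isUnit_level_zero u w := by
    rw [octEntry]
    exact isUnit_var_inl _
  isUnit_level_one u w := by
    rw [octEntry]
    exact isUnit_var_inl _
  exists_dilation := exists_isCornerDilation_octEntry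
  isOctahedral := h

lemma isOctahedralUpTo_octEntry (n : ℕ) :
    IsOctahedralUpTo (var (Sum.inr 0)) (var (Sum.inr 1)) octEntry n := by
  induction n with
  | zero => exact fun k hk => by omega
  | succ n ih =>
    intro k hk u w
    have hgen := isGenericOctahedral_octEntry (n := k + 1) fun j hj => ih j (by omega)
    have hdvd := hgen.dvd_octNumerator u w
    rw [octEntry, dif_pos hdvd, mul_comm]
    exact hdvd.choose_spec.symm

lemma octEntry_ne_zero (k : ℕ) (u w : ℤ) : octEntry k u w ≠ 0 :=
  (isGenericOctahedral_octEntry (isOctahedralUpTo_octEntry k)).entry_ne_zero le_rfl u w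

end OctEntry

lemma exists_skew_coordinates {i j k : ℤ} (h : Even (i + j + k)) (hk : 0 ≤ k) :
    ∃ (n : ℕ) (u w : ℤ), i = u + w - n ∧ j = u - w ∧ k = n := by
  obtain ⟨u, hu⟩ := h
  exact ⟨k.toNat, u, u - j, by omega, by omega, by omega⟩

section Field

open LaurentRing

variable {F : Type*} [Field F] {x : OctInit ⊕ Fin 2 → F} {y : ℤ → ℤ → ℤ → F}
  (hinit : ∀ i j k : ℤ, ∀ h : Even (i + j + k) ∧ (k = 0 ∨ k = 1),
    y i j k = x (Sum.inl ⟨(i, j, k), h⟩))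
  (hrec : ∀ i j k : ℤ, Even (i + j + k) → 2 ≤ k →
    y i j k = (x (Sum.inr 0) * y (i + 1) j (k - 1) * y (i - 1) j (k - 1)
      + x (Sum.inr 1) * y i (j + 1) (k - 1) * y i (j - 1) (k - 1)) / y i j (k - 2))

include hinit hrec in
lemma lift_octEntry_eq (hx : ∀ s, IsUnit (x (Sum.inl s)))
    (hne : ∀ (k : ℕ) (u w : ℤ), lift x hx (octEntry k u w) ≠ 0 ∨
      y (u + w - k) (u - w) k ≠ 0) (k : ℕ) (u w : ℤ) :
    lift x hx (octEntry k u w) = y (u + w - k) (u - w) k := by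
  refine IsOctahedralUpTo.map_eq (v := fun k u w => y (u + w - k) (u - w) k) _
    isOctahedralUpTo_octEntry (fun u w => ?_) (fun u w => ?_) (fun k u w => ?_) hne k u w
  · rw [octEntry, lift_var, hinit _ _ _ ⟨⟨u, by push_cast; ring⟩, .inl Nat.cast_zero⟩]
    simp [OctInit.level0]
  · rw [octEntry, lift_var, hinit _ _ _ ⟨⟨u, by push_cast; ring⟩, .inr Nat.cast_one⟩]
    simp [OctInit.level1]
  · simp only [octNumerator, lift_var]
    rw [hrec _ _ _ ⟨u, by ring⟩ (by omega)]
    push_cast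
    ring_nf

include hinit hrec in
lemma octahedron_recurrence_ne_zero (hind : AlgebraicIndependent ℤ x)
    (i j k : ℤ) (hijk : Even (i + j + k)) (hk : 0 ≤ k) : y i j k ≠ 0 := by
  have hx (s : OctInit) : IsUnit (x (Sum.inl s)) := (hind.ne_zero (Sum.inl s)).isUnit
  have hne (k : ℕ) (u w : ℤ) : lift x hx (octEntry k u w) ≠ 0 :=
    (map_ne_zero_iff _ (lift_injective _ _ hind)).2 (octEntry_ne_zero k u w)
  obtain ⟨n, u, w, rfl, rfl, rfl⟩ := exists_skew_coordinates hijk hk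
  exact lift_octEntry_eq hinit hrec hx (fun k u w => .inl (hne k u w)) n u w ▸ hne n u w

end Field

theorem octahedron_recurrence_laurent_general
    {F : Type*} [Field F] {x : OctInit ⊕ Fin 2 → F} {y : ℤ → ℤ → ℤ → F}
    (hinit : ∀ i j k : ℤ, ∀ h : Even (i + j + k) ∧ (k = 0 ∨ k = 1),
      y i j k = x (Sum.inl ⟨(i, j, k), h⟩))
    (hrec : ∀ i j k : ℤ, Even (i + j + k) → 2 ≤ k →
      y i j k = (x (Sum.inr 0) * y (i + 1) j (k - 1) * y (i - 1) j (k - 1)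
        + x (Sum.inr 1) * y i (j + 1) (k - 1) * y i (j - 1) (k - 1)) / y i j (k - 2))
    (hne : ∀ i j k : ℤ, Even (i + j + k) → 0 ≤ k → y i j k ≠ 0) (i j k : ℤ)
    (hijk : Even (i + j + k)) (hk : 0 ≤ k) :
    y i j k ∈ Algebra.adjoin ℤ
      (Set.range (fun s : OctInit => x (Sum.inl s)) ∪
        Set.range (fun s : OctInit => (x (Sum.inl s))⁻¹) ∪ {x (Sum.inr 0), x (Sum.inr 1)}) := by
  have hx (s : OctInit) : IsUnit (x (Sum.inl s)) := by
    obtain ⟨⟨i, j, k⟩, h⟩ := s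
    exact hinit i j k h ▸ (hne i j k h.1 (by rcases h.2 with rfl | rfl <;> decide)).isUnit
  obtain ⟨n, u, w, rfl, rfl, rfl⟩ := exists_skew_coordinates hijk hk
  rw [← lift_octEntry_eq hinit hrec hx fun k u w => .inr (hne _ _ _ ⟨u, by ring⟩ k.cast_nonneg)]
  refine LaurentRing.lift_mem hx (fun v => Algebra.subset_adjoin ?_)
    (fun s => Algebra.subset_adjoin ?_) _
  · rcases v with s | t
    · exact .inl (.inl ⟨s, rfl⟩)
    · fin_cases t <;> simp
  · exact .inl (.inr ⟨s, rfl⟩)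

/-- The octahedron recurrence on the half-lattice
{(i,j,k) : i+j+k even, k ≥ 0} exhibits the Laurent phenomenon:
each entry is a Laurent polynomial over ℤ[α,β] in the initial entries
(those with k ∈ {0,1}). -/
theorem octahedron_recurrence_laurent
    (F : Type*) [Field F] [Algebra (MvPolynomial (OctInit ⊕ Fin 2) ℤ) F]
    [IsFractionRing (MvPolynomial (OctInit ⊕ Fin 2) ℤ) F]
    (x : OctInit ⊕ Fin 2 → F)
    (hx : ∀ s, x s = algebraMap (MvPolynomial (OctInit ⊕ Fin 2) ℤ) F (X s))
    (α β : F) (hα : α = x (Sum.inr 0)) (hβ : β = x (Sum.inr 1))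
    (y : ℤ → ℤ → ℤ → F)
    (hinit : ∀ i j k : ℤ, ∀ h : Even (i + j + k) ∧ (k = 0 ∨ k = 1),
      y i j k = x (Sum.inl ⟨(i, j, k), h⟩))
    (hrec : ∀ i j k : ℤ, Even (i + j + k) → 2 ≤ k →
      y i j k = (α * y (i + 1) j (k - 1) * y (i - 1) j (k - 1)
        + β * y i (j + 1) (k - 1) * y i (j - 1) (k - 1)) / y i j (k - 2)) :
    ∀ i j k : ℤ, Even (i + j + k) → 0 ≤ k →
      y i j k ∈ Algebra.adjoin ℤ
        (Set.range (fun s : OctInit => x (Sum.inl s)) ∪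
         Set.range (fun s : OctInit => (x (Sum.inl s))⁻¹) ∪ {α, β}) := by
  subst hα hβ
  have hind : AlgebraicIndependent ℤ x := by
    have haeval : aeval x = (IsScalarTower.toAlgHom ℤ (MvPolynomial (OctInit ⊕ Fin 2) ℤ) F) :=
      MvPolynomial.algHom_ext fun s => by simp [hx]
    rw [algebraicIndependent_iff_injective_aeval, haeval]
    exact IsFractionRing.injective (MvPolynomial (OctInit ⊕ Fin 2) ℤ) F
  exact octahedron_recurrence_laurent_general hinit hrec
    (octahedron_recurrence_ne_zero hinit hrec hind)
end

section
/- Let y : ℤ≥0² → F satisfy the knight recurrence y_{i,j} = (α y_{i,j−1} y_{i−2,j} + β y_{i−1,j} y_{i−1,j−1})/y_{i−2,j−1} for i ≥ 2, j ≥ 1, where the entries y_{a,b} with a < 2 or b < 1 are independent indeterminates and F is the rational function field in them over ℤ[α,β]. Then every y_{i,j} is a Laurent polynomial in the initial entries with coefficients in ℤ[α,β]. -/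
open MvPolynomial

/-- Index set for the initial cluster of the knight recurrence:
pairs (a,b) ∈ ℤ≥0² with a < 2 or b < 1. -/
def KnightInit : Type := {p : ℕ × ℕ // p.1 < 2 ∨ p.2 < 1}

/-!
It suffices that every entry is integral at each prime `p` of the polynomial ring that divides no
initial variable. If `p` divides `α` or `β`, every entry is a unit at `p`, since one of the two
terms of the recurrence vanishes modulo `p` and the other does not. Otherwise argue by induction on
the rows. Given an entry of row `j` divisible by `p`, `p` does not involve the variable
`X_{0,j+1}`, so the shear `X_{0,j+1} ↦ X_{0,j+1} + X_{1,j+1}` fixes `p` and row `j`. It moves row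
`j + 1` to a second solution of the linear recurrence that row `j` imposes on its successor, and
the Casoratian of the two solutions is a product of entries of row `j` up to units. This excludes
common zeros of neighbouring entries modulo `p`; the entries needed to rewrite a division by an
entry divisible by `p` as a division by its neighbours are therefore units.
-/

section PrimeAdicValuation

/-- The inclusion of `ℕ∞` into `ℤ ∪ {∞}`, whose multiplicative version is a group with zero. -/
noncomputable def enatToWithTopInt : ℕ∞ →+ WithTop ℤ :=
  AddMonoidHom.withTopMap (Nat.castAddMonoidHom ℤ)

lemma strictMono_enatToWithTopInt : StrictMono enatToWithTopInt :=
  WithTop.strictMono_map_iff.2 Nat.strictMono_cast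

variable {A : Type*} [CommRing A] [IsDomain A] {p : A}

/-- The multiplicity of a prime element, as a multiplicative valuation. Its value group is written
so that Mathlib's additive `multiplicity_addValuation` can be reused. -/
noncomputable def multiplicityValuation (hp : Prime p) :
    Valuation A (Multiplicative (WithTop ℤ)ᵒᵈ) :=
  AddValuation.toValuation <| (multiplicity_addValuation hp).map enatToWithTopInt rfl
    strictMono_enatToWithTopInt.monotone

lemma multiplicityValuation_apply (hp : Prime p) (a : A) : multiplicityValuation hp a =
    Multiplicative.ofAdd (OrderDual.toDual (enatToWithTopInt (emultiplicity p a))) :=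
  rfl

lemma multiplicityValuation_le_one (hp : Prime p) (a : A) : multiplicityValuation hp a ≤ 1 :=
  (map_zero enatToWithTopInt).symm.trans_le (strictMono_enatToWithTopInt.monotone zero_le)

lemma multiplicityValuation_lt_one_iff (hp : Prime p) {a : A} :
    multiplicityValuation hp a < 1 ↔ p ∣ a := by
  rw [← emultiplicity_ne_zero, ← pos_iff_ne_zero, ← strictMono_enatToWithTopInt.lt_iff_lt,
    map_zero]
  rfl

lemma multiplicityValuation_map_ringEquiv (hp : Prime p) {φ : A ≃+* A} (hφ : φ p = p) (a : A) :
    multiplicityValuation hp (φ a) = multiplicityValuation hp a := by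
  rw [multiplicityValuation_apply, multiplicityValuation_apply]
  conv_lhs => rw [← hφ, emultiplicity_map_eq]

variable [WfDvdMonoid A]

lemma nonZeroDivisors_le_primeCompl_supp_multiplicityValuation (hp : Prime p) :
    nonZeroDivisors A ≤ (multiplicityValuation hp).supp.primeCompl := by
  intro a ha h
  have htop : enatToWithTopInt (emultiplicity p a) = enatToWithTopInt ⊤ := h
  exact finiteMultiplicity_iff_emultiplicity_ne_top.1
    (FiniteMultiplicity.of_prime_left hp (nonZeroDivisors.ne_zero ha))
    (strictMono_enatToWithTopInt.injective htop)

variable (F : Type*) [Field F] [Algebra A F] [IsFractionRing A F]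

/-- The `p`-adic valuation on the fraction field, for a prime element `p`. -/
noncomputable def primeAdicValuation (hp : Prime p) : Valuation F (Multiplicative (WithTop ℤ)ᵒᵈ) :=
  (multiplicityValuation hp).extendToLocalization
    (nonZeroDivisors_le_primeCompl_supp_multiplicityValuation hp) F

lemma primeAdicValuation_algebraMap (hp : Prime p) (a : A) :
    primeAdicValuation F hp (algebraMap A F a) = multiplicityValuation hp a :=
  Valuation.extendToLocalization_apply_map_apply _ _ _ _

lemma primeAdicValuation_algebraMap_lt_one_iff (hp : Prime p) {a : A} :
    primeAdicValuation F hp (algebraMap A F a) < 1 ↔ p ∣ a := by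
  rw [primeAdicValuation_algebraMap, multiplicityValuation_lt_one_iff]

lemma primeAdicValuation_algebraMap_le_one (hp : Prime p) (a : A) :
    primeAdicValuation F hp (algebraMap A F a) ≤ 1 :=
  (primeAdicValuation_algebraMap F hp a).trans_le (multiplicityValuation_le_one hp a)

lemma primeAdicValuation_algebraMap_eq_one (hp : Prime p) {a : A} (ha : ¬ p ∣ a) :
    primeAdicValuation F hp (algebraMap A F a) = 1 :=
  (primeAdicValuation_algebraMap_le_one F hp a).eq_of_not_lt
    (mt (primeAdicValuation_algebraMap_lt_one_iff F hp).1 ha)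

lemma primeAdicValuation_ringEquivOfRingEquiv (hp : Prime p) {φ : A ≃+* A} (hφ : φ p = p) (z : F) :
    primeAdicValuation F hp (IsFractionRing.ringEquivOfRingEquiv φ z) =
      primeAdicValuation F hp z := by
  obtain ⟨a, b, -, rfl⟩ := IsFractionRing.div_surjective (A := A) z
  simp only [map_div₀, IsFractionRing.ringEquivOfRingEquiv_algebraMap,
    primeAdicValuation_algebraMap, multiplicityValuation_map_ringEquiv hp hφ]

end PrimeAdicValuation

section Overring

variable {A : Type*} [CommRing A] {F : Type*} [Field F] [Algebra A F] [IsFractionRing A F]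
  {B : Subring F}

lemma inv_algebraMap_mem_of_dvd (hB : ∀ a, algebraMap A F a ∈ B) {a b : A} (hb : b ≠ 0)
    (hab : a ∣ b) (h : (algebraMap A F b)⁻¹ ∈ B) : (algebraMap A F a)⁻¹ ∈ B := by
  obtain ⟨c, rfl⟩ := hab
  have hc : algebraMap A F c ≠ 0 := by
    simpa using right_ne_zero_of_mul hb
  have key : (algebraMap A F a)⁻¹ = (algebraMap A F (a * c))⁻¹ * algebraMap A F c := by
    rw [map_mul, mul_inv, inv_mul_cancel_right₀ hc]
  exact key ▸ mul_mem h (hB c)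

variable [IsDomain A] [UniqueFactorizationMonoid A]

lemma inv_algebraMap_mem_of_forall_prime (hB : ∀ a, algebraMap A F a ∈ B) (b : A)
    (h : ∀ p, Prime p → p ∣ b → (algebraMap A F p)⁻¹ ∈ B) : (algebraMap A F b)⁻¹ ∈ B := by
  induction b using UniqueFactorizationMonoid.induction_on_prime with
  | h₁ => simp
  | h₂ u hu =>
    exact inv_algebraMap_mem_of_dvd hB one_ne_zero hu.dvd (by simp)
  | h₃ a p _ hp ih =>
    rw [map_mul, mul_inv]
    exact mul_mem (h p hp (dvd_mul_right p a)) (ih fun q hq hqa => h q hq (hqa.mul_left p))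

theorem mem_of_forall_primeAdicValuation_le_one (hB : ∀ a, algebraMap A F a ∈ B) {z : F}
    (hz : ∀ p, ∀ hp : Prime p, (algebraMap A F p)⁻¹ ∉ B → primeAdicValuation F hp z ≤ 1) :
    z ∈ B := by
  obtain ⟨a, b, hab, rfl⟩ := IsFractionRing.exists_reduced_fraction (A := A) z
  rw [IsFractionRing.mk'_eq_div] at hz ⊢
  rw [div_eq_mul_inv]
  refine mul_mem (hB a) (inv_algebraMap_mem_of_forall_prime hB _ fun p hp hpb => ?_)
  by_contra hpB
  have hle : primeAdicValuation F hp (algebraMap A F a) ≤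
      primeAdicValuation F hp (algebraMap A F b) := by
    have := hz p hp hpB
    rwa [map_div₀, div_le_one₀ (by simp [zero_lt_iff])] at this
  have hpa : p ∣ a := (primeAdicValuation_algebraMap_lt_one_iff F hp).1
    (hle.trans_lt ((primeAdicValuation_algebraMap_lt_one_iff F hp).2 hpb))
  exact hp.not_isUnit (hab hpa hpb)

end Overring

section Shear

variable {σ R : Type*} [CommRing R]

lemma mem_supported_of_dvd [NoZeroDivisors R] {S : Set σ} {p q : MvPolynomial σ R} (hpq : p ∣ q)
    (hq : q ≠ 0) (hqS : q ∈ supported R S) : p ∈ supported R S := by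
  classical
  obtain ⟨r, rfl⟩ := hpq
  have hvars : p.vars ⊆ (p * r).vars := by
    rw [vars_def, vars_def,
      degrees_mul_eq (left_ne_zero_of_mul hq) (right_ne_zero_of_mul hq)]
    exact Multiset.toFinset_subset.2 (Multiset.subset_of_le (Multiset.le_add_right _ _))
  rw [mem_supported] at hqS ⊢
  exact (Finset.coe_subset.2 hvars).trans hqS

variable [DecidableEq σ]

/-- The substitution `X s ↦ X s + q` fixing all other variables. -/
noncomputable def shear (s : σ) (q : MvPolynomial σ R) : MvPolynomial σ R →ₐ[R] MvPolynomial σ R :=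
  aeval (Function.update X s (X s + q))

variable {s : σ} {q : MvPolynomial σ R}

@[simp]
lemma shear_X_self : shear s q (X s) = X s + q := by
  simp [shear]

@[simp]
lemma shear_X_of_ne {u : σ} (hu : u ≠ s) : shear s q (X u) = X u := by
  simp [shear, hu]

lemma shear_eq_self {p : MvPolynomial σ R} (hp : p ∈ supported R {s}ᶜ) : shear s q p = p := by
  have hle : supported R {s}ᶜ ≤ AlgHom.equalizer (shear s q) (AlgHom.id R _) := by
    rw [supported_eq_adjoin_X, Algebra.adjoin_le_iff]
    rintro _ ⟨u, hu, rfl⟩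
    exact shear_X_of_ne hu
  exact hle hp

lemma shear_comp_shear_neg (hq : q ∈ supported R {s}ᶜ) :
    (shear s q).comp (shear s (-q)) = AlgHom.id R _ := by
  ext1 u
  obtain rfl | hu := eq_or_ne u s
  · simp [shear_eq_self hq]
  · simp [hu]

/-- `shear s q` as an automorphism, for a polynomial `q` not involving `X s`. -/
noncomputable def shearEquiv (hq : q ∈ supported R {s}ᶜ) :
    MvPolynomial σ R ≃ₐ[R] MvPolynomial σ R :=
  AlgEquiv.ofAlgHom (shear s q) (shear s (-q)) (shear_comp_shear_neg hq)
    (by simpa using shear_comp_shear_neg (neg_mem hq))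

end Shear

section RationalSupported

variable {σ R : Type*} [CommRing R] (F : Type*) [Field F] [Algebra (MvPolynomial σ R) F]

/-- The subfield of rational functions involving only the variables in `S`. -/
def rationalSupported (S : Set σ) : Subfield F :=
  Subfield.closure ((supported R S).toSubring.map (algebraMap (MvPolynomial σ R) F))

variable {F} {S : Set σ}

lemma algebraMap_X_mem_rationalSupported [Nontrivial R] {s : σ} (hs : s ∈ S) :
    algebraMap (MvPolynomial σ R) F (X s) ∈ rationalSupported (R := R) F S :=
  Subfield.subset_closure ⟨X s, X_mem_supported.2 hs, rfl⟩

lemma exists_div_eq_of_mem_rationalSupported {z : F} (hz : z ∈ rationalSupported (R := R) F S) :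
    ∃ f ∈ supported R S, ∃ g ∈ supported R S,
      algebraMap (MvPolynomial σ R) F f / algebraMap (MvPolynomial σ R) F g = z := by
  rw [rationalSupported, Subfield.mem_closure_iff, Subring.closure_eq] at hz
  obtain ⟨_, ⟨f, hf, rfl⟩, _, ⟨g, hg, rfl⟩, hfg⟩ := hz
  exact ⟨f, hf, g, hg, hfg⟩

variable [IsDomain R] [UniqueFactorizationMonoid R] [IsFractionRing (MvPolynomial σ R) F]

lemma mem_supported_of_primeAdicValuation_lt_one {p : MvPolynomial σ R} (hp : Prime p) {z : F}
    (hz : z ∈ rationalSupported (R := R) F S) (hz0 : z ≠ 0)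
    (hlt : primeAdicValuation F hp z < 1) : p ∈ supported R S := by
  obtain ⟨f, hf, g, -, rfl⟩ := exists_div_eq_of_mem_rationalSupported hz
  obtain ⟨hf0, hg0⟩ := div_ne_zero_iff.1 hz0
  have hpf : p ∣ f := by
    rw [← primeAdicValuation_algebraMap_lt_one_iff F hp, ← div_mul_cancel₀ (algebraMap _ F f) hg0,
      map_mul]
    exact mul_lt_one_of_lt_of_le hlt (primeAdicValuation_algebraMap_le_one F hp g)
  exact mem_supported_of_dvd hpf (by simpa using hf0) hf

-- If `p` divides the numerator of `z`, it does not involve `X s`, so the shear fixes it.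
lemma exists_ringHom_shear_of_primeAdicValuation_lt_one {p : MvPolynomial σ R} (hp : Prime p)
    {s t : σ} (hst : t ≠ s) {z : F} (hz : z ∈ rationalSupported (R := R) F {s}ᶜ) (hz0 : z ≠ 0)
    (hlt : primeAdicValuation F hp z < 1) :
    ∃ τ : F →+* F, (∀ w, primeAdicValuation F hp (τ w) = primeAdicValuation F hp w) ∧
      (∀ w ∈ rationalSupported (R := R) F {s}ᶜ, τ w = w) ∧
      τ (algebraMap (MvPolynomial σ R) F (X s)) =
        algebraMap (MvPolynomial σ R) F (X s) + algebraMap (MvPolynomial σ R) F (X t) := by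
  classical
  have hpS := mem_supported_of_primeAdicValuation_lt_one hp hz hz0 hlt
  have ht : (X t : MvPolynomial σ R) ∈ supported R {s}ᶜ := X_mem_supported.2 hst
  let φ : MvPolynomial σ R ≃+* MvPolynomial σ R := shearEquiv ht
  have hφ (f : MvPolynomial σ R) : φ f = shear s (X t) f := rfl
  let τ : F ≃+* F := IsFractionRing.ringEquivOfRingEquiv φ
  have hτ (f : MvPolynomial σ R) : τ (algebraMap _ F f) = algebraMap _ F (φ f) :=
    IsFractionRing.ringEquivOfRingEquiv_algebraMap φ f
  refine ⟨τ, primeAdicValuation_ringEquivOfRingEquiv F hp (shear_eq_self hpS), fun w hw => ?_, ?_⟩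
  · obtain ⟨f, hf, g, hg, rfl⟩ := exists_div_eq_of_mem_rationalSupported hw
    simp only [RingHom.coe_coe, map_div₀, hτ, hφ, shear_eq_self hf, shear_eq_self hg]
  · rw [RingHom.coe_coe, hτ, hφ, shear_X_self, map_add]

end RationalSupported

lemma algebraMap_mem_of_forall_algebraMap_X_mem {σ R F : Type*} [CommSemiring R] [CommSemiring F]
    [Algebra R F] [Algebra (MvPolynomial σ R) F] [IsScalarTower R (MvPolynomial σ R) F]
    {L : Subalgebra R F} (hL : ∀ s : σ, algebraMap (MvPolynomial σ R) F (X s) ∈ L)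
    (f : MvPolynomial σ R) : algebraMap (MvPolynomial σ R) F f ∈ L := by
  have htop : ⊤ ≤ L.comap (IsScalarTower.toAlgHom R (MvPolynomial σ R) F) := by
    rw [← adjoin_range_X, Algebra.adjoin_le_iff]
    rintro _ ⟨s, rfl⟩
    exact hL s
  exact htop Algebra.mem_top

section ValuationResidue

variable {F Γ₀ : Type*} [Field F] [LinearOrderedCommGroupWithZero Γ₀] {v : Valuation F Γ₀} {a b : F}

lemma valuation_mul_eq_one_iff (ha : v a ≤ 1) (hb : v b ≤ 1) :
    v (a * b) = 1 ↔ v a = 1 ∧ v b = 1 := by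
  rw [map_mul]
  exact ⟨fun h => ⟨ha.antisymm (h.ge.trans (mul_le_of_le_one_right' hb)),
    hb.antisymm (h.ge.trans (mul_le_of_le_one_left' ha))⟩, fun h => by rw [h.1, h.2, one_mul]⟩

lemma valuation_eq_one_of_add_lt_one (h : v (a + b) < 1) (ha : v a = 1) : v b = 1 := by
  simpa [ha] using v.map_eq_of_sub_lt (x := -a) (y := b) (by simpa [add_comm, ha] using h)

end ValuationResidue

section RowStep

variable {R : Type*} [CommRing R] {α β : R} {r s z : ℕ → R}

/-- The knight recurrence, cleared of denominators, between two consecutive rows `r` and `s`. For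
fixed `r` it is a linear recurrence of order two for `s`. -/
def IsRowStep (α β : R) (r s : ℕ → R) : Prop :=
  ∀ k, s (k + 2) * r k = α * r (k + 2) * s k + β * s (k + 1) * r (k + 1)

lemma IsRowStep.map {S : Type*} [CommRing S] (f : R →+* S) (hs : IsRowStep α β r s) :
    IsRowStep (f α) (f β) (f ∘ r) (f ∘ s) := fun k => by
  simpa only [Function.comp_apply, map_mul, map_add] using congrArg f (hs k)

lemma IsRowStep.casoratian [NoZeroDivisors R] (hr : ∀ k, r k ≠ 0) (hs : IsRowStep α β r s)
    (hz : IsRowStep α β r z) (k : ℕ) :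
    (s (k + 1) * z k - s k * z (k + 1)) * (r 0 * r 1) =
      (-α) ^ k * (s 1 * z 0 - s 0 * z 1) * (r (k + 1) * r k) := by
  induction k with
  | zero => ring
  | succ k ih =>
    apply mul_right_cancel₀ (hr k)
    rw [pow_succ]
    linear_combination (z (k + 1) * r 0 * r 1) * hs k - (s (k + 1) * r 0 * r 1) * hz k
      - α * r (k + 2) * ih

end RowStep

section ReducedRow

variable {F Γ₀ : Type*} [Field F] [LinearOrderedCommGroupWithZero Γ₀] {v : Valuation F Γ₀}
  {α β : F} {r s : ℕ → F}

/-- A row of `v`-integral entries in which any two entries at distance one or two are coprime at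
`v`. -/
structure IsReducedRow (v : Valuation F Γ₀) (r : ℕ → F) : Prop where
  le_one : ∀ k, v (r k) ≤ 1
  eq_one_or_succ : ∀ k, v (r k) = 1 ∨ v (r (k + 1)) = 1
  eq_one_or_add_two : ∀ k, v (r k) = 1 ∨ v (r (k + 2)) = 1

/-- The entries of the row `r` are coprime at `v` to the entries of the next row `s` that occur
together with them in the knight recurrence. -/
structure IsReducedPair (v : Valuation F Γ₀) (r s : ℕ → F) : Prop where
  eq_one_or : ∀ k, v (r k) = 1 ∨ v (s k) = 1
  eq_one_or_succ : ∀ k, v (r k) = 1 ∨ v (s (k + 1)) = 1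

/-- A `v`-preserving endomorphism that fixes the data of the linear recurrence `IsRowStep α β r`
and moves the solution `s` to another one, by the shear `s 0 ↦ s 0 + s 1`. -/
structure IsRowShear (v : Valuation F Γ₀) (α β : F) (r s : ℕ → F) (τ : F →+* F) : Prop where
  valuation_map : ∀ z, v (τ z) = v z
  map_alpha : τ α = α
  map_beta : τ β = β
  map_row : ∀ k, τ (r k) = r k
  map_zero : τ (s 0) = s 0 + s 1
  map_one : τ (s 1) = s 1

lemma IsRowShear.casoratian {τ : F →+* F} (hτ : IsRowShear v α β r s τ) (hr : ∀ k, r k ≠ 0)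
    (hs : IsRowStep α β r s) (k : ℕ) :
    (s (k + 1) * τ (s k) - s k * τ (s (k + 1))) * (r 0 * r 1) =
      (-α) ^ k * s 1 ^ 2 * (r (k + 1) * r k) := by
  have hz : IsRowStep α β r (τ ∘ s) := by
    simpa only [hτ.map_alpha, hτ.map_beta, show τ ∘ r = r from funext hτ.map_row] using hs.map τ
  have key := hs.casoratian hr hz k
  simp only [Function.comp_apply, hτ.map_zero, hτ.map_one] at key
  rw [key]
  ring

namespace IsRowStep

-- A common zero of `s k` and `r (k + 1)` at `v` would kill the Casoratian of `s` and its shear.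
lemma eq_one_or_succ_of_isRowShear (hs : IsRowStep α β r s) (hα : v α = 1)
    (hr0 : ∀ k, r k ≠ 0) (hr : IsReducedRow v r) (hsO : ∀ k, v (s k) ≤ 1) (hs0 : v (s 0) = 1)
    (hs1 : v (s 1) = 1) (hτ : ∀ k, v (r k) < 1 → ∃ τ, IsRowShear v α β r s τ) (k : ℕ) :
    v (s k) = 1 ∨ v (r (k + 1)) = 1 := by
  obtain _ | k := k
  · exact Or.inl hs0
  by_contra! hne
  have hsk : v (s (k + 1)) < 1 := (hsO _).lt_of_ne hne.1
  obtain ⟨τ, hτ⟩ := hτ (k + 2) ((hr.le_one _).lt_of_ne hne.2)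
  have hlt : v ((s (k + 1) * τ (s k) - s k * τ (s (k + 1))) * (r 0 * r 1)) < 1 := by
    rw [map_mul, map_mul]
    refine mul_lt_one_of_lt_of_le (v.map_sub_lt ?_ ?_)
      (mul_le_one' (hr.le_one 0) (hr.le_one 1)) <;> rw [map_mul, hτ.valuation_map]
    · exact mul_lt_one_of_lt_of_le hsk (hsO k)
    · exact Right.mul_lt_one_of_le_of_lt (hsO k) hsk
  have hunit : v ((-α) ^ k * s 1 ^ 2 * (r (k + 1) * r k)) = 1 := by
    simp only [map_mul, map_pow, Valuation.map_neg, hα, hs1, one_pow, one_mul,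
      (hr.eq_one_or_succ (k + 1)).resolve_right hne.2, (hr.eq_one_or_add_two k).resolve_right hne.2]
  exact hlt.ne (hτ.casoratian hr0 hs k ▸ hunit)

-- Modulo the maximal ideal, the left-hand side of the recurrence vanishes.
lemma eq_one_and_eq_one_iff (hs : IsRowStep α β r s) (hα : v α = 1) (hβ : v β = 1)
    (hrO : ∀ k, v (r k) ≤ 1) (hsO : ∀ k, v (s k) ≤ 1) {k : ℕ} (hk : v (s (k + 2)) ≠ 1) :
    v (r (k + 2)) = 1 ∧ v (s k) = 1 ↔ v (s (k + 1)) = 1 ∧ v (r (k + 1)) = 1 := by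
  have hsum : v (α * (r (k + 2) * s k) + β * (s (k + 1) * r (k + 1))) < 1 := by
    rw [← mul_assoc, ← mul_assoc, ← hs k, map_mul]
    exact mul_lt_one_of_lt_of_le ((hsO _).lt_of_ne hk) (hrO k)
  have hα' (x : F) : v (α * x) = v x := by rw [map_mul, hα, one_mul]
  have hβ' (x : F) : v (β * x) = v x := by rw [map_mul, hβ, one_mul]
  have hiff : v (r (k + 2) * s k) = 1 ↔ v (s (k + 1) * r (k + 1)) = 1 := by
    rw [← hα', ← hβ' (s _ * _)]
    exact ⟨valuation_eq_one_of_add_lt_one hsum,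
      valuation_eq_one_of_add_lt_one (add_comm (α * _) _ ▸ hsum)⟩
  rwa [valuation_mul_eq_one_iff (hrO _) (hsO _), valuation_mul_eq_one_iff (hsO _) (hrO _)] at hiff

variable (hs : IsRowStep α β r s) (hα : v α = 1) (hβ : v β = 1) (hr : IsReducedRow v r)
  (hsO : ∀ k, v (s k) ≤ 1) (hs0 : v (s 0) = 1)
  (hrs : ∀ k, v (s k) = 1 ∨ v (r (k + 1)) = 1)

include hs hα hβ hr hsO hs0 hrs

lemma isReducedRow : IsReducedRow v s := by
  have hmod {k : ℕ} := hs.eq_one_and_eq_one_iff hα hβ hr.le_one hsO (k := k)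
  have hsucc (k : ℕ) : v (s k) = 1 ∨ v (s (k + 1)) = 1 := by
    induction k with
    | zero => exact Or.inl hs0
    | succ k ih =>
      refine or_iff_not_imp_right.2 fun hk => ?_
      by_contra hne
      exact hne ((hmod hk).1 ⟨(hrs (k + 1)).resolve_left hne, ih.resolve_right hne⟩).1
  refine ⟨hsO, hsucc, fun k => or_iff_not_imp_right.2 fun hk => ?_⟩
  by_contra hne
  exact hne ((hmod hk).2 ⟨(hsucc k).resolve_left hne, (hrs k).resolve_left hne⟩).2

lemma isReducedPair (hs1 : v (s 1) = 1) : IsReducedPair v r s := by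
  have hmod {k : ℕ} := hs.eq_one_and_eq_one_iff hα hβ hr.le_one hsO (k := k)
  constructor <;> refine fun k => or_iff_not_imp_right.2 fun hk => ?_
  · obtain _ | _ | k := k
    · exact absurd hs0 hk
    · exact absurd hs1 hk
    by_contra hne
    exact hne ((hmod hk).2 ⟨(hrs (k + 1)).resolve_right hne,
      (hr.eq_one_or_succ (k + 1)).resolve_right hne⟩).1
  · obtain _ | k := k
    · exact absurd hs1 hk
    by_contra hne
    exact hne ((hmod hk).1 ⟨(hr.eq_one_or_succ (k + 1)).resolve_left hne,
      (hrs k).resolve_right hne⟩).2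

end IsRowStep

end ReducedRow

section KnightArray

variable {F : Type*} [Field F] {α β : F} {y : ℕ → ℕ → F}

/-- The knight recurrence; `y i j` stands in column `i` and row `j`. -/
def IsKnightArray (α β : F) (y : ℕ → ℕ → F) : Prop :=
  ∀ i j, y (i + 2) (j + 1) =
    (α * y (i + 2) j * y i (j + 1) + β * y (i + 1) (j + 1) * y (i + 1) j) / y i j

lemma knight_induction {P : ℕ → ℕ → Prop} (initial : ∀ a b, a < 2 ∨ b < 1 → P a b)
    (step : ∀ i j, P i j → P (i + 1) j → P (i + 2) j → P i (j + 1) → P (i + 1) (j + 1) →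
      P (i + 2) (j + 1)) : ∀ i j, P i j := by
  intro i j
  induction j generalizing i with
  | zero => exact initial i 0 (by omega)
  | succ j ihj =>
    induction i using Nat.twoStepInduction with
    | zero => exact initial 0 _ (by omega)
    | one => exact initial 1 _ (by omega)
    | more i ih ih' => exact step i j (ihj i) (ihj (i + 1)) (ihj (i + 2)) ih ih'

namespace IsKnightArray

lemma mem_subfield (hy : IsKnightArray α β y) {K : Subfield F} {n : ℕ} (hα : α ∈ K) (hβ : β ∈ K)
    (hinit : ∀ a b, a < 2 ∨ b < 1 → b ≤ n → y a b ∈ K) (i : ℕ) {j : ℕ} (hj : j ≤ n) :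
    y i j ∈ K := by
  induction i, j using knight_induction with
  | initial a b hab => exact hinit a b hab hj
  | step i j h00 h10 h20 h01 h11 =>
    have hj' : j ≤ n := j.le_succ.trans hj
    rw [hy]
    exact div_mem (add_mem (mul_mem (mul_mem hα (h20 hj')) (h01 hj))
      (mul_mem (mul_mem hβ (h11 hj)) (h10 hj'))) (h00 hj')

lemma isRowStep (hy : IsKnightArray α β y) (hy0 : ∀ i j, y i j ≠ 0) (j : ℕ) :
    IsRowStep α β (y · j) (y · (j + 1)) :=
  fun i => (eq_div_iff (hy0 i j)).1 (hy i j)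

-- Substituting the recurrence for the five entries of the numerator of `y (i + 4) (j + 2)` that
-- it determines makes the divisor `y (i + 2) (j + 1)` of that numerator cancel.
lemma mul_eq_of_ne_zero (hy : IsKnightArray α β y) (hy0 : ∀ i j, y i j ≠ 0) (i j : ℕ) :
    y (i + 4) (j + 2) * (y (i + 2) j * y i (j + 1) * y (i + 1) (j + 1) * y (i + 1) j) =
      α ^ 2 * y (i + 4) j * y (i + 2) (j + 2) * y i (j + 1) * y (i + 1) (j + 1) * y (i + 1) j
      + α ^ 2 * β * y (i + 3) (j + 1) * y (i + 3) j * y i (j + 2) * y (i + 1) (j + 1)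
        * y (i + 1) j
      + β ^ 2 * y (i + 2) (j + 2) * y (i + 3) (j + 1) * y (i + 2) j * y i (j + 1) * y (i + 1) j
      + α * β * y (i + 3) (j + 1) * y (i + 1) (j + 2) * (y (i + 3) j * y (i + 1) (j + 1) * y i j
        + β * y (i + 2) j * y (i + 2) j * y i (j + 1)) := by
  apply mul_right_cancel₀ (hy0 (i + 2) (j + 1))
  linear_combination
    y (i + 2) j * y i (j + 1) * y (i + 1) (j + 1) * y (i + 1) j * hy.isRowStep hy0 (j + 1) (i + 2)
    + α * y (i + 2) (j + 2) * y i (j + 1) * y (i + 1) (j + 1) * y (i + 1) j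
      * hy.isRowStep hy0 j (i + 2)
    + α * β * y (i + 3) (j + 1) * y (i + 3) j * y (i + 1) (j + 1) * y (i + 1) j
      * hy.isRowStep hy0 (j + 1) i
    + β * y (i + 3) (j + 1) * y (i + 2) j * y i (j + 1) * y (i + 1) j
      * hy.isRowStep hy0 (j + 1) (i + 1)
    + α * β * y (i + 3) (j + 1) * y (i + 1) (j + 2) * y (i + 2) j * y i (j + 1)
      * hy.isRowStep hy0 j (i + 1)
    - α * β * y (i + 3) (j + 1) * y (i + 1) (j + 2) * y (i + 3) j * y (i + 1) (j + 1)
      * hy.isRowStep hy0 j i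

variable {Γ₀ : Type*} [LinearOrderedCommGroupWithZero Γ₀] {v : Valuation F Γ₀}

lemma valuation_eq_one (hy : IsKnightArray α β y) (hne : v α ≠ v β) (hmax : max (v α) (v β) = 1)
    (hinit : ∀ a b, a < 2 ∨ b < 1 → v (y a b) = 1) (i j : ℕ) : v (y i j) = 1 := by
  induction i, j using knight_induction with
  | initial a b hab => exact hinit a b hab
  | step i j h00 h10 h20 h01 h11 =>
    rw [hy, map_div₀, h00, div_one, v.map_add_of_distinct_val] <;>
      simpa only [map_mul, h10, h20, h01, h11, mul_one]

-- The division by an entry divisible at `v` is avoided by `mul_eq_of_ne_zero`.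
lemma valuation_add_four_le_one (hy : IsKnightArray α β y) (hy0 : ∀ i j, y i j ≠ 0)
    (hα : v α ≤ 1) (hβ : v β ≤ 1) {i j : ℕ} (hj : ∀ k, v (y k j) ≤ 1)
    (hj' : IsReducedRow v (y · (j + 1))) (hjj' : IsReducedPair v (y · j) (y · (j + 1)))
    (hlt : v (y (i + 2) (j + 1)) < 1) (h0 : v (y i (j + 2)) ≤ 1) (h1 : v (y (i + 1) (j + 2)) ≤ 1)
    (h2 : v (y (i + 2) (j + 2)) ≤ 1) : v (y (i + 4) (j + 2)) ≤ 1 := by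
  have hunit : v (y (i + 2) j * y i (j + 1) * y (i + 1) (j + 1) * y (i + 1) j) = 1 := by
    simp only [map_mul, mul_one, (hjj'.eq_one_or (i + 2)).resolve_right hlt.ne,
      (hj'.eq_one_or_add_two i).resolve_right hlt.ne,
      (hj'.eq_one_or_succ (i + 1)).resolve_right hlt.ne,
      (hjj'.eq_one_or_succ (i + 1)).resolve_right hlt.ne]
  suffices h : v (y (i + 4) (j + 2) *
      (y (i + 2) j * y i (j + 1) * y (i + 1) (j + 1) * y (i + 1) j)) ≤ 1 by
    rwa [map_mul, hunit, mul_one] at h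
  rw [hy.mul_eq_of_ne_zero hy0]
  have hj'O := hj'.le_one
  simp only [← v.mem_integer_iff] at *
  repeat' apply_rules [add_mem, mul_mem, pow_mem]

lemma valuation_row_succ_le_one (hy : IsKnightArray α β y) (hα : v α ≤ 1) (hβ : v β ≤ 1) {j : ℕ}
    (hj : ∀ k, v (y k j) ≤ 1) (hinit : ∀ a < 2, v (y a (j + 1)) ≤ 1)
    (hsing : ∀ k, v (y k j) < 1 → (∀ l < k + 2, v (y l (j + 1)) ≤ 1) → v (y (k + 2) (j + 1)) ≤ 1)
    (k : ℕ) : v (y k (j + 1)) ≤ 1 := by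
  induction k using Nat.strong_induction_on with
  | _ k ih =>
    obtain _ | _ | k := k
    · exact hinit 0 (by omega)
    · exact hinit 1 (by omega)
    obtain hlt | heq := (hj k).lt_or_eq
    · exact hsing k hlt ih
    · rw [hy, map_div₀, heq, div_one]
      exact v.integer.add_mem
        (v.integer.mul_mem (v.integer.mul_mem hα (hj (k + 2))) (ih k (by omega)))
        (v.integer.mul_mem (v.integer.mul_mem hβ (ih (k + 1) (by omega))) (hj (k + 1)))

lemma isReducedRow_and_isReducedPair (hy : IsKnightArray α β y) (hy0 : ∀ i j, y i j ≠ 0)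
    (hα : v α = 1) (hβ : v β = 1) (hinit : ∀ a b, a < 2 ∨ b < 1 → v (y a b) = 1)
    (hshear : ∀ j k, v (y k j) < 1 → ∃ τ, IsRowShear v α β (y · j) (y · (j + 1)) τ) (j : ℕ)
    (hj : IsReducedRow v (y · j)) (hj' : ∀ k, v (y k (j + 1)) ≤ 1) :
    IsReducedRow v (y · (j + 1)) ∧ IsReducedPair v (y · j) (y · (j + 1)) := by
  have hstep := hy.isRowStep hy0 j
  have h0 : v (y 0 (j + 1)) = 1 := hinit _ _ (by omega)
  have h1 : v (y 1 (j + 1)) = 1 := hinit _ _ (by omega)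
  have hcop := hstep.eq_one_or_succ_of_isRowShear hα (hy0 · j) hj hj' h0 h1 (hshear j)
  exact ⟨hstep.isReducedRow hα hβ hj hj' h0 hcop, hstep.isReducedPair hα hβ hj hj' h0 hcop h1⟩

theorem isReducedRow (hy : IsKnightArray α β y) (hy0 : ∀ i j, y i j ≠ 0)
    (hα : v α = 1) (hβ : v β = 1) (hinit : ∀ a b, a < 2 ∨ b < 1 → v (y a b) = 1)
    (hshear : ∀ j k, v (y k j) < 1 → ∃ τ, IsRowShear v α β (y · j) (y · (j + 1)) τ) (j : ℕ) :
    IsReducedRow v (y · j) := by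
  suffices h : IsReducedRow v (y · j) ∧ IsReducedRow v (y · (j + 1)) ∧
      IsReducedPair v (y · j) (y · (j + 1)) from h.1
  have hnext := hy.isReducedRow_and_isReducedPair hy0 hα hβ hinit hshear
  induction j with
  | zero =>
    have hrow0 (k : ℕ) : v (y k 0) = 1 := hinit k 0 (by omega)
    have hred : IsReducedRow v (y · 0) :=
      ⟨fun k => (hrow0 k).le, fun k => Or.inl (hrow0 k), fun k => Or.inl (hrow0 k)⟩
    exact ⟨hred, hnext 0 hred <| hy.valuation_row_succ_le_one hα.le hβ.le hred.le_one
      (fun a ha => (hinit a 1 (Or.inl ha)).le) fun k hk => absurd (hrow0 k) hk.ne⟩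
  | succ j ih =>
    obtain ⟨hj, hj', hjj'⟩ := ih
    refine ⟨hj', hnext (j + 1) hj' <| hy.valuation_row_succ_le_one hα.le hβ.le hj'.le_one
      (fun a ha => (hinit a (j + 2) (Or.inl ha)).le) fun k hk hprev => ?_⟩
    obtain _ | _ | i := k
    · exact absurd (hinit 0 (j + 1) (by omega)) hk.ne
    · exact absurd (hinit 1 (j + 1) (by omega)) hk.ne
    · exact hy.valuation_add_four_le_one hy0 hα.le hβ.le hj.le_one hj' hjj' hk
        (hprev i (by omega)) (hprev (i + 1) (by omega)) (hprev (i + 2) (by omega))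

end IsKnightArray

end KnightArray

section GenericKnightArray

/-- The variable that stands for the initial entry `y a b`. -/
def knightVar (a b : ℕ) (hab : a < 2 ∨ b < 1) : KnightInit ⊕ Fin 2 := Sum.inl ⟨(a, b), hab⟩

lemma knightVar_inj {a b c d : ℕ} {hab : a < 2 ∨ b < 1} {hcd : c < 2 ∨ d < 1} :
    knightVar a b hab = knightVar c d hcd ↔ a = c ∧ b = d :=
  Sum.inl_injective.eq_iff.trans (Subtype.ext_iff.trans Prod.mk_inj)

variable {R F : Type*} [CommRing R] [Field F] [Algebra (MvPolynomial (KnightInit ⊕ Fin 2) R) F]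
  {y : ℕ → ℕ → F}

local notation "ι" => algebraMap (MvPolynomial (KnightInit ⊕ Fin 2) R) F

variable (R) in
/-- A knight array whose initial entries and coefficients `α`, `β` are independent variables over
`R`: the variables `Sum.inr 0` and `Sum.inr 1` are the coefficients. -/
structure IsGenericKnightArray (y : ℕ → ℕ → F) : Prop where
  initial : ∀ a b, ∀ hab : a < 2 ∨ b < 1, y a b = ι (X (knightVar a b hab))
  isKnightArray : IsKnightArray (ι (X (Sum.inr 0))) (ι (X (Sum.inr 1))) y

namespace IsGenericKnightArray

lemma mem_rationalSupported [Nontrivial R] (hy : IsGenericKnightArray R y) (i j : ℕ) :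
    y i j ∈ rationalSupported (R := R) F {knightVar 0 (j + 1) (Or.inl two_pos)}ᶜ := by
  refine hy.isKnightArray.mem_subfield (algebraMap_X_mem_rationalSupported Sum.inr_ne_inl)
    (algebraMap_X_mem_rationalSupported Sum.inr_ne_inl) (fun a b hab hb => ?_) i le_rfl
  rw [hy.initial a b hab]
  exact algebraMap_X_mem_rationalSupported fun h => by have := knightVar_inj.1 h; omega

variable [IsDomain R] [UniqueFactorizationMonoid R]
  [IsFractionRing (MvPolynomial (KnightInit ⊕ Fin 2) R) F]
  {p : MvPolynomial (KnightInit ⊕ Fin 2) R}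

lemma primeAdicValuation_init (hy : IsGenericKnightArray R y) (hp : Prime p)
    (hpX : ∀ s, ¬ p ∣ X (Sum.inl s)) (a b : ℕ) (hab : a < 2 ∨ b < 1) :
    primeAdicValuation F hp (y a b) = 1 := by
  rw [hy.initial a b hab]
  exact primeAdicValuation_algebraMap_eq_one F hp (hpX _)

lemma primeAdicValuation_eq_one_of_dvd_coeff (hy : IsGenericKnightArray R y) (hp : Prime p)
    (hpX : ∀ s, ¬ p ∣ X (Sum.inl s)) (hpC : p ∣ X (Sum.inr 0) ∨ p ∣ X (Sum.inr 1)) (i j : ℕ) :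
    primeAdicValuation F hp (y i j) = 1 := by
  have hlt {q} := primeAdicValuation_algebraMap_lt_one_iff F hp (a := q)
  have heq {q} := primeAdicValuation_algebraMap_eq_one F hp (a := q)
  have hnot_both : ¬ (p ∣ X (Sum.inr 0) ∧ p ∣ X (Sum.inr 1)) := fun h => by
    simpa using X_dvd_X.1 ((hp.associated_of_dvd X_prime h.1).symm.dvd.trans h.2)
  obtain h | h := hpC
  · have h' := heq fun h' => hnot_both ⟨h, h'⟩
    exact hy.isKnightArray.valuation_eq_one (by rw [h']; exact (hlt.2 h).ne)
      (by rw [h', max_eq_right (hlt.2 h).le]) (hy.primeAdicValuation_init hp hpX) i j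
  · have h' := heq fun h' => hnot_both ⟨h', h⟩
    exact hy.isKnightArray.valuation_eq_one (by rw [h']; exact (hlt.2 h).ne')
      (by rw [h', max_eq_left (hlt.2 h).le]) (hy.primeAdicValuation_init hp hpX) i j

-- At the prime `α`, every entry is a unit.
lemma ne_zero (hy : IsGenericKnightArray R y) (i j : ℕ) : y i j ≠ 0 := by
  have hα : Prime (X (Sum.inr 0) : MvPolynomial (KnightInit ⊕ Fin 2) R) := X_prime
  refine (primeAdicValuation F hα).ne_zero_iff.1 ?_
  rw [hy.primeAdicValuation_eq_one_of_dvd_coeff hα (fun s => by simp [X_dvd_X]) (Or.inl dvd_rfl)]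
  exact one_ne_zero

lemma exists_isRowShear (hy : IsGenericKnightArray R y) (hp : Prime p) (j k : ℕ)
    (hlt : primeAdicValuation F hp (y k j) < 1) :
    ∃ τ, IsRowShear (primeAdicValuation F hp) (ι (X (Sum.inr 0))) (ι (X (Sum.inr 1)))
      (y · j) (y · (j + 1)) τ := by
  have hst : knightVar 1 (j + 1) (Or.inl one_lt_two) ≠ knightVar 0 (j + 1) (Or.inl two_pos) :=
    fun h => one_ne_zero (knightVar_inj.1 h).1
  obtain ⟨τ, hτv, hτ, hτs⟩ := exists_ringHom_shear_of_primeAdicValuation_lt_one hp hst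
    (hy.mem_rationalSupported k j) (hy.ne_zero k j) hlt
  rw [← hy.initial, ← hy.initial] at hτs
  refine ⟨τ, hτv, hτ _ (algebraMap_X_mem_rationalSupported Sum.inr_ne_inl),
    hτ _ (algebraMap_X_mem_rationalSupported Sum.inr_ne_inl),
    fun i => hτ _ (hy.mem_rationalSupported i j), hτs, ?_⟩
  rw [hy.initial 1 (j + 1) (Or.inl one_lt_two)]
  exact hτ _ (algebraMap_X_mem_rationalSupported hst)

theorem primeAdicValuation_le_one (hy : IsGenericKnightArray R y) (hp : Prime p)
    (hpX : ∀ s, ¬ p ∣ X (Sum.inl s)) (i j : ℕ) : primeAdicValuation F hp (y i j) ≤ 1 := by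
  by_cases hpC : p ∣ X (Sum.inr 0) ∨ p ∣ X (Sum.inr 1)
  · exact (hy.primeAdicValuation_eq_one_of_dvd_coeff hp hpX hpC i j).le
  · rw [not_or] at hpC
    exact (hy.isKnightArray.isReducedRow hy.ne_zero
      (primeAdicValuation_algebraMap_eq_one F hp hpC.1)
      (primeAdicValuation_algebraMap_eq_one F hp hpC.2)
      (hy.primeAdicValuation_init hp hpX) (hy.exists_isRowShear hp) j).le_one i

end IsGenericKnightArray

end GenericKnightArray

theorem knight_recurrence_laurent_general
    {R : Type*} [CommRing R] [IsDomain R] [UniqueFactorizationMonoid R]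
    {F : Type*} [Field F] [Algebra R F] [Algebra (MvPolynomial (KnightInit ⊕ Fin 2) R) F]
    [IsScalarTower R (MvPolynomial (KnightInit ⊕ Fin 2) R) F]
    [IsFractionRing (MvPolynomial (KnightInit ⊕ Fin 2) R) F]
    (x : KnightInit ⊕ Fin 2 → F)
    (hx : ∀ s, x s = algebraMap (MvPolynomial (KnightInit ⊕ Fin 2) R) F (X s))
    (α β : F) (hα : α = x (Sum.inr 0)) (hβ : β = x (Sum.inr 1))
    (y : ℕ → ℕ → F)
    (hinit : ∀ a b : ℕ, ∀ h : a < 2 ∨ b < 1, y a b = x (Sum.inl ⟨(a, b), h⟩))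
    (hrec : ∀ i j : ℕ,
      y (i + 2) (j + 1) =
        (α * y (i + 2) j * y i (j + 1) + β * y (i + 1) (j + 1) * y (i + 1) j) / y i j)
    (i j : ℕ) :
    y i j ∈ Algebra.adjoin R
      (Set.range (fun s : KnightInit => x (Sum.inl s)) ∪
       Set.range (fun s : KnightInit => (x (Sum.inl s))⁻¹) ∪ {α, β}) := by
  obtain rfl : x = fun s => algebraMap _ F (X s) := funext hx
  subst hα hβ
  have hy : IsGenericKnightArray R y := ⟨hinit, hrec⟩
  set L : Set F := _ ∪ _ ∪ _
  have hX (s : KnightInit ⊕ Fin 2) :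
      algebraMap (MvPolynomial (KnightInit ⊕ Fin 2) R) F (X s) ∈ Algebra.adjoin R L := by
    refine Algebra.subset_adjoin ?_
    obtain s | s := s
    · exact Or.inl (Or.inl ⟨s, rfl⟩)
    · fin_cases s <;> simp [L]
  have hpoly (f : MvPolynomial (KnightInit ⊕ Fin 2) R) :
      algebraMap _ F f ∈ (Algebra.adjoin R L).toSubring :=
    algebraMap_mem_of_forall_algebraMap_X_mem hX f
  refine mem_of_forall_primeAdicValuation_le_one hpoly fun p hp hpL =>
    hy.primeAdicValuation_le_one hp (fun s hps => hpL ?_) i j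
  exact inv_algebraMap_mem_of_dvd hpoly (X_ne_zero _) hps
    (Algebra.subset_adjoin (Or.inl (Or.inr ⟨s, rfl⟩)))

/-- Elkies's knight recurrence
y_{i,j} y_{i−2,j−1} = α y_{i,j−1} y_{i−2,j} + β y_{i−1,j} y_{i−1,j−1}
on ℤ≥0² exhibits the Laurent phenomenon over ℤ[α,β]. -/
theorem knight_recurrence_laurent
    (F : Type*) [Field F] [Algebra (MvPolynomial (KnightInit ⊕ Fin 2) ℤ) F]
    [IsFractionRing (MvPolynomial (KnightInit ⊕ Fin 2) ℤ) F]
    (x : KnightInit ⊕ Fin 2 → F)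
    (hx : ∀ s, x s = algebraMap (MvPolynomial (KnightInit ⊕ Fin 2) ℤ) F (X s))
    (α β : F) (hα : α = x (Sum.inr 0)) (hβ : β = x (Sum.inr 1))
    (y : ℕ → ℕ → F)
    (hinit : ∀ a b : ℕ, ∀ h : a < 2 ∨ b < 1, y a b = x (Sum.inl ⟨(a, b), h⟩))
    (hrec : ∀ i j : ℕ,
      y (i + 2) (j + 1) =
        (α * y (i + 2) j * y i (j + 1) + β * y (i + 1) (j + 1) * y (i + 1) j) / y i j) :
    ∀ i j : ℕ, y i j ∈ Algebra.adjoin ℤ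
      (Set.range (fun s : KnightInit => x (Sum.inl s)) ∪
       Set.range (fun s : KnightInit => (x (Sum.inl s))⁻¹) ∪ {α, β}) :=
  knight_recurrence_laurent_general x hx α β hα hβ y hinit hrec
end

section
/- Let A be a UFD and P₁,…,Pₙ ∈ A[x₁,…,xₙ] nonzero polynomials such that: (1) each Pₖ does not depend on xₖ and is not divisible by any xᵢ; (2) for i ≠ j, P_{ji} := Pⱼ|_{xᵢ=0} and Pᵢ are coprime; (3) for i ≠ j there exist b ≥ 0 and a Laurent monomial L with coefficient in A coprime to Pᵢ such that L · P_{ji}^b · Pᵢ = Pᵢ|_{xⱼ ← P_{ji}/xⱼ}. Define Fᵢ replacing xᵢ by Pᵢ/xᵢ. Then every finite composition F_{i₁} ∘ ⋯ ∘ F_{i_m} is given coordinatewise by Laurent polynomials in x₁,…,xₙ with coefficients in A. -/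
open MvPolynomial

/-!
Let `x` be the initial cluster, and let `x₁`, `x₂`, `x₃` arise from it by exchanging successively at
`i`, `j`, `i`, where `i ≠ j`. Exchanges are involutive, and any algebraically independent cluster is
the image of `x` under an `A`-endomorphism of the field `F`; so, by induction on the length of a
word starting with `i, j`, the coordinates it produces from `x` are Laurent polynomials in `x₁` and
also in `x₃`. It remains to see that such an element is a Laurent polynomial in `x`.

This is checked at one prime `p` of `A[x]` at a time. A prime dividing a variable is invertible
among Laurent polynomials, so let `p` divide none. If `p ∤ Pᵢ`, the coordinates of `x₁` are `p`-adic
units, and Laurent polynomials in `x₁` are `p`-integral. If `p ∣ Pᵢ`, the same holds for `x₃`: one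
expands in powers of `z = Pᵢ / xᵢ`, the `i`-th coordinate of `x₁`. Modulo `z`, the `j`-th coordinate
of `x₂` is `P_{ji} / xⱼ`, a unit by condition (2), and the `i`-th coordinate of `x₃` is `β xᵢ + e`,
where `e` is free of `xᵢ`, and so is the quotient `β` of `Pᵢ|_{xⱼ ← P_{ji}/xⱼ}` by `Pᵢ`, a unit by
condition (3). As `p` is itself free of `xᵢ`, it cannot divide `β xᵢ + e` without dividing `β`.
-/

section PrimeValuation

variable {R : Type*} (K : Type*) [CommRing R] [IsDomain R] [UniqueFactorizationMonoid R]
  [Field K] [Algebra R K] [IsFractionRing R K] {p : R} (hp : Prime p)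

/-- The localization of `R` at the prime ideal generated by `p`, as a valuation subring of the
fraction field. -/
noncomputable def primeValuationSubring : ValuationSubring K :=
  haveI : (Ideal.span {p}).IsPrime := (Ideal.span_singleton_prime hp.ne_zero).2 hp
  { (Localization.subalgebra.ofField K (Ideal.span {p}).primeCompl
      (Ideal.primeCompl_le_nonZeroDivisors _)).toSubring with
    mem_or_inv_mem' := fun y ↦ by
      rw [← IsFractionRing.mk'_num_den' R y, inv_div, div_eq_mul_inv, div_eq_mul_inv]
      by_cases hden : p ∣ IsFractionRing.den R y
      · have hnum : ¬ p ∣ IsFractionRing.num R y := fun hnum ↦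
          hp.not_isUnit (IsFractionRing.num_den_reduced R y hnum hden)
        exact .inr ⟨_, _, by simpa [Ideal.primeCompl, Ideal.mem_span_singleton] using hnum, rfl⟩
      · exact .inl ⟨_, _, by simpa [Ideal.primeCompl, Ideal.mem_span_singleton] using hden, rfl⟩ }

variable {K} in
lemma mem_primeValuationSubring {y : K} :
    y ∈ primeValuationSubring K hp ↔
      ∃ a b : R, ¬ p ∣ b ∧ y = algebraMap R K a / algebraMap R K b := by
  simp only [div_eq_mul_inv, ← Ideal.mem_span_singleton]
  exact exists_congr fun a ↦ exists_congr fun b ↦ exists_prop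

/-- The `p`-adic valuation on the fraction field of a unique factorization domain. -/
noncomputable abbrev primeValuation : Valuation K (primeValuationSubring K hp).ValueGroup :=
  (primeValuationSubring K hp).valuation

lemma primeValuation_algebraMap_le_one (r : R) : primeValuation K hp (algebraMap R K r) ≤ 1 := by
  rw [ValuationSubring.valuation_le_one_iff, mem_primeValuationSubring]
  exact ⟨r, 1, hp.not_dvd_one, by simp⟩

variable {K} in
lemma dvd_of_div_mem_primeValuationSubring {a b : R} (hb : b ≠ 0) (hpb : p ∣ b)
    (hab : algebraMap R K a / algebraMap R K b ∈ primeValuationSubring K hp) : p ∣ a := by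
  obtain ⟨c, d, hd, hcd⟩ := (mem_primeValuationSubring hp).1 hab
  have hd0 : d ≠ 0 := by
    rintro rfl
    exact hd (dvd_zero p)
  have hcross : a * d = c * b := by
    apply IsFractionRing.injective R K
    rw [div_eq_div_iff (by simpa using hb) (by simpa using hd0)] at hcd
    rw [map_mul, map_mul, hcd]
  exact (hp.dvd_or_dvd (hcross ▸ hpb.mul_left c)).resolve_right hd

lemma primeValuation_algebraMap_eq_one_iff {r : R} :
    primeValuation K hp (algebraMap R K r) = 1 ↔ ¬ p ∣ r := by
  constructor
  · intro hr hpr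
    have hr0 : r ≠ 0 := by
      rintro rfl
      simp at hr
    refine hp.not_dvd_one (dvd_of_div_mem_primeValuationSubring hp (K := K) hr0 hpr ?_)
    rw [← ValuationSubring.valuation_le_one_iff, map_div₀, hr, map_one, map_one, div_one]
  · intro hr
    have hr0 : algebraMap R K r ≠ 0 := by
      rw [Ne, FaithfulSMul.algebraMap_eq_zero_iff]
      rintro rfl
      exact hr (dvd_zero p)
    have hinv : (algebraMap R K r)⁻¹ ∈ primeValuationSubring K hp :=
      (mem_primeValuationSubring hp).2 ⟨1, r, hr, by simp⟩
    rw [← ValuationSubring.valuation_le_one_iff, map_inv₀,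
      inv_le_one₀ (zero_lt_iff.2 ((map_ne_zero _).2 hr0))] at hinv
    exact le_antisymm (primeValuation_algebraMap_le_one K hp r) hinv

lemma primeValuation_algebraMap_lt_one_iff {r : R} :
    primeValuation K hp (algebraMap R K r) < 1 ↔ p ∣ r := by
  rw [(primeValuation_algebraMap_le_one K hp r).lt_iff_ne, Ne,
    primeValuation_algebraMap_eq_one_iff, not_not]

lemma primeValuation_algebraMap_le_of_pow_dvd {a b : R} (h : ∀ m, p ^ m ∣ b → p ^ m ∣ a) :
    primeValuation K hp (algebraMap R K a) ≤ primeValuation K hp (algebraMap R K b) := by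
  by_cases hb : b = 0
  · have ha : a = 0 := by
      by_contra ha
      exact (FiniteMultiplicity.of_prime_left hp ha).not_pow_dvd_of_multiplicity_lt
        (Nat.lt_succ_self _) (h _ (hb ▸ dvd_zero _))
    rw [ha, hb]
  · obtain ⟨m, c, hc, rfl⟩ := WfDvdMonoid.max_power_factor hb hp.irreducible
    obtain ⟨d, rfl⟩ := h m (dvd_mul_right _ _)
    rw [map_mul, map_mul, map_mul, map_mul, (primeValuation_algebraMap_eq_one_iff K hp).2 hc]
    gcongr
    exact primeValuation_algebraMap_le_one K hp d

variable {K} in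
lemma mem_subring_of_forall_prime (B : Subring K) (hB : ∀ r, algebraMap R K r ∈ B) {y : K}
    (hy : ∀ (p : R) (hp : Prime p),
      y ∈ primeValuationSubring K hp ∨ (algebraMap R K p)⁻¹ ∈ B) : y ∈ B := by
  have hinv : ∀ d : R, d ∣ IsFractionRing.den R y → (algebraMap R K d)⁻¹ ∈ B := by
    intro d
    induction d using UniqueFactorizationMonoid.induction_on_prime with
    | h₁ => simp
    | h₂ d hd =>
      obtain ⟨e, he⟩ := hd.exists_right_inv
      intro _
      rw [inv_eq_of_mul_eq_one_right (by rw [← map_mul, he, map_one])]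
      exact hB e
    | h₃ d p _ hp ih =>
      intro hpd
      have hpden : p ∣ IsFractionRing.den R y := dvd_of_mul_right_dvd hpd
      have hyp : y ∉ primeValuationSubring K hp := fun hyp ↦ by
        rw [← IsFractionRing.mk'_num_den' R y] at hyp
        exact hp.not_isUnit (IsFractionRing.num_den_reduced R y
          (dvd_of_div_mem_primeValuationSubring hp (by simp) hpden hyp) hpden)
      rw [map_mul, mul_inv]
      exact mul_mem ((hy p hp).resolve_left hyp) (ih (dvd_of_mul_left_dvd hpd))
  rw [← IsFractionRing.mk'_num_den' R y, div_eq_mul_inv]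
  exact mul_mem (hB _) (hinv _ dvd_rfl)

end PrimeValuation

section Evaluation

variable {σ A B : Type*} [CommRing A] [CommRing B] [Algebra A B]

lemma aeval_mem_subring (T : Subring B) (hT : ∀ a, algebraMap A B a ∈ T) {v : σ → B}
    (hv : ∀ k, v k ∈ T) (p : MvPolynomial σ A) : aeval v p ∈ T :=
  eval₂_mem (fun _ _ ↦ hT _) hv

variable [DecidableEq σ]

lemma update_mem {T S : Type*} [SetLike S T] {s : S} {v : σ → T} {i k : σ} {t : T}
    (hv : k ≠ i → v k ∈ s) (ht : t ∈ s) : Function.update v i t k ∈ s := by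
  obtain rfl | hk := eq_or_ne k i
  · rwa [Function.update_self]
  · rw [Function.update_of_ne hk]
    exact hv hk

lemma aeval_update_of_notMem_vars (v : σ → B) {i : σ} (t : B) {p : MvPolynomial σ A}
    (hp : i ∉ p.vars) : aeval (Function.update v i t) p = aeval v p := by
  refine eval₂Hom_congr' rfl (fun k hk _ ↦ ?_) rfl
  rw [Function.update_of_ne (ne_of_mem_of_not_mem hk hp)]

lemma exists_aeval_update_eq_taylor (T : Subring B) (hT : ∀ a, algebraMap A B a ∈ T) {v : σ → B}
    (hv : ∀ k, v k ∈ T) (i : σ) {t : B} (ht : t ∈ T) (p : MvPolynomial σ A) :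
    ∃ r ∈ T, aeval (Function.update v i t) p =
      aeval v p + (t - v i) * aeval v (pderiv i p) + (t - v i) ^ 2 * r := by
  have hmem := aeval_mem_subring T hT hv
  induction p using MvPolynomial.induction_on with
  | C a => exact ⟨0, zero_mem T, by simp⟩
  | add p q hp hq =>
    obtain ⟨r, hr, hpr⟩ := hp
    obtain ⟨s, hs, hqs⟩ := hq
    exact ⟨r + s, add_mem hr hs, by simp only [map_add, hpr, hqs]; ring⟩
  | mul_X p k hp =>
    obtain ⟨r, hr, hpr⟩ := hp
    obtain rfl | hk := eq_or_ne k i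
    · refine ⟨aeval v (pderiv k p) + r * t, add_mem (hmem _) (mul_mem hr ht), ?_⟩
      simp only [map_mul, aeval_X, Function.update_self, hpr, pderiv_mul, pderiv_X_self, map_add,
        mul_one]
      ring
    · refine ⟨r * v k, mul_mem hr (hv k), ?_⟩
      simp only [map_mul, aeval_X, Function.update_of_ne hk, hpr, pderiv_mul, pderiv_X_of_ne hk,
        mul_zero, add_zero]
      ring

/-- The specialization at `Xᵢ = 0`; the polynomial `P_{ji}` is `setZero i (P j)`. -/
noncomputable def setZero (i : σ) : MvPolynomial σ A →ₐ[A] MvPolynomial σ A :=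
  aeval fun k ↦ if k = i then 0 else X k

lemma aeval_setZero (v : σ → B) (i : σ) (p : MvPolynomial σ A) :
    aeval v (setZero i p) = aeval (Function.update v i 0) p := by
  rw [setZero, comp_aeval_apply]
  congr 1
  ext k
  obtain rfl | hk := eq_or_ne k i <;> simp [*]

omit [DecidableEq σ] in
lemma aeval_mem_subfield_of_notMem_vars {F : Type*} [Field F] [Algebra A F] (E : Subfield F)
    (hAE : ∀ a, algebraMap A F a ∈ E) {v : σ → F} {i : σ} (hv : ∀ k, k ≠ i → v k ∈ E)
    {p : MvPolynomial σ A} (hp : i ∉ p.vars) : aeval v p ∈ E := by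
  classical
  rw [← aeval_update_of_notMem_vars v 0 hp]
  exact aeval_mem_subring E.toSubring hAE (fun k ↦ update_mem (hv k) (zero_mem E)) p

end Evaluation

section Exchange

variable {σ A F : Type*} [DecidableEq σ] [CommRing A] [Field F] [Algebra A F]

/-- The exchange map `Fᵢ`, replacing the coordinate `vᵢ` of a cluster `v` by `Pᵢ(v) / vᵢ`. -/
noncomputable def exchange (P : σ → MvPolynomial σ A) (i : σ) (v : σ → F) : σ → F :=
  Function.update v i (aeval v (P i) / v i)

lemma aeval_exchange_exchange {P : σ → MvPolynomial σ A} (v : σ → F) {i j : σ} (hij : i ≠ j)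
    (hdep : i ∉ (P i).vars) :
    aeval (exchange P j (exchange P i v)) (P i) =
      aeval (Function.update (Function.update v i 0) j (exchange P j (exchange P i v) j))
        (P i) := by
  rw [exchange, Function.update_self, exchange, Function.update_comm hij, Function.update_comm hij,
    aeval_update_of_notMem_vars _ _ hdep, aeval_update_of_notMem_vars _ _ hdep]

section Valuation

variable {Γ₀ : Type*} [LinearOrderedCommGroupWithZero Γ₀] (ν : Valuation F Γ₀)
  {P : σ → MvPolynomial σ A} {x : σ → F} {i j : σ}

lemma valuation_exchange_eq_one (hx : ∀ k, ν (x k) = 1) (hP : ν (aeval x (P i)) = 1) (k : σ) :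
    ν (exchange P i x k) = 1 := by
  obtain rfl | hk := eq_or_ne k i
  · rw [exchange, Function.update_self, map_div₀, hP, hx, div_one]
  · rw [exchange, Function.update_of_ne hk, hx]

/- `E` stands for the field of elements free of `xᵢ`. If `ν` comes from a prime dividing `Pᵢ`, then
`z = Pᵢ(x) / xᵢ` is small, and the coefficients of `1` and `z` in expansions in `z` must lie in `E`:
a linear polynomial in `xᵢ` over `E` is at least as large as its leading coefficient. -/

variable (hA : ∀ a, ν (algebraMap A F a) ≤ 1) (hx : ∀ k, ν (x k) = 1)
  (hPi : ν (aeval x (P i)) < 1) (hij : i ≠ j)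

include hA hx hPi hij

lemma exists_exchange_exchange_apply_eq (E : Subfield F) (hAE : ∀ a, algebraMap A F a ∈ E)
    (hxE : ∀ k, k ≠ i → x k ∈ E) :
    ∃ c ∈ E, ν c ≤ 1 ∧ ∃ r, ν r ≤ 1 ∧ exchange P j (exchange P i x) j =
      aeval (Function.update x i 0) (P j) / x j +
        aeval x (P i) / x i * (c + aeval x (P i) / x i * r) := by
  set z := aeval x (P i) / x i with hz
  have hxj : (x j)⁻¹ ∈ ν.integer := by simp [Valuation.mem_integer_iff, hx]
  have hzν : z ∈ ν.integer := by simpa [hz, Valuation.mem_integer_iff, hx] using hPi.le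
  have hx₀ : ∀ k, Function.update x i 0 k ∈ ν.integer :=
    fun k ↦ update_mem (fun _ ↦ (hx k).le) (zero_mem _)
  obtain ⟨r, hr, hPj⟩ := exists_aeval_update_eq_taylor ν.integer hA hx₀ i hzν (P j)
  rw [Function.update_idem, Function.update_self, sub_zero] at hPj
  refine ⟨aeval (Function.update x i 0) (pderiv i (P j)) * (x j)⁻¹,
    mul_mem (aeval_mem_subring E.toSubring hAE (fun k ↦ update_mem (hxE k) (zero_mem E)) _)
      (inv_mem (hxE j hij.symm)),
    ν.integer.mul_mem (aeval_mem_subring _ hA hx₀ _) hxj, r * (x j)⁻¹,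
    ν.integer.mul_mem hr hxj, ?_⟩
  rw [exchange, Function.update_self, exchange, Function.update_of_ne hij.symm, ← hz, hPj]
  ring

variable (hPj : ν (aeval (Function.update x i 0) (P j)) = 1)

include hPj

lemma valuation_exchange_exchange_apply_eq_one :
    ν (exchange P j (exchange P i x) j) = 1 := by
  obtain ⟨c, -, hc, r, hr, hu⟩ := exists_exchange_exchange_apply_eq ν hA hx hPi hij ⊤
    (fun _ ↦ trivial) (fun _ _ ↦ trivial)
  have hz : ν (aeval x (P i) / x i) < 1 := by rwa [map_div₀, hx, div_one]
  have hcr : ν (c + aeval x (P i) / x i * r) ≤ 1 :=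
    ν.integer.add_mem hc (ν.integer.mul_mem hz.le hr)
  have hu₀ : ν (aeval (Function.update x i 0) (P j) / x j) = 1 := by
    rw [map_div₀, hPj, hx, div_one]
  rw [hu, Valuation.map_add_eq_of_lt_left, hu₀]
  rw [hu₀, map_mul]
  exact mul_lt_one_of_lt_of_le hz hcr

variable (E : Subfield F) (hAE : ∀ a, algebraMap A F a ∈ E) (hxE : ∀ k, k ≠ i → x k ∈ E)
  (hdep : i ∉ (P i).vars)

include hAE hxE hdep

lemma exists_aeval_exchange_exchange_eq :
    ∃ e ∈ E, ν e ≤ 1 ∧ ∃ t, ν t ≤ 1 ∧ aeval (exchange P j (exchange P i x)) (P i) =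
      aeval (Function.update x j (aeval (Function.update x i 0) (P j) / x j)) (P i) +
        aeval x (P i) / x i * (e + aeval x (P i) / x i * t) := by
  obtain ⟨c, hcE, hc, r, hr, hu⟩ := exists_exchange_exchange_apply_eq ν hA hx hPi hij E hAE hxE
  have huν := (valuation_exchange_exchange_apply_eq_one ν hA hx hPi hij hPj).le
  have hx₂ := aeval_exchange_exchange x hij hdep (P := P)
  set u := exchange P j (exchange P i x) j
  set z := aeval x (P i) / x i with hz
  set u₀ := aeval (Function.update x i 0) (P j) / x j with hu₀
  set v := Function.update (Function.update x i 0) j u₀ with hv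
  have hzν : z ∈ ν.integer := by simpa [hz, Valuation.mem_integer_iff, hx] using hPi.le
  have hx₀E : ∀ k, Function.update x i 0 k ∈ E := fun k ↦ update_mem (hxE k) (zero_mem E)
  have hvE : ∀ k, v k ∈ E := fun k ↦ update_mem (fun _ ↦ hx₀E k)
    (div_mem (aeval_mem_subring E.toSubring hAE hx₀E _) (hxE j hij.symm))
  have hvν : ∀ k, v k ∈ ν.integer :=
    fun k ↦ update_mem (fun _ ↦ update_mem (fun _ ↦ (hx k).le) (zero_mem _))
      (by simp [hu₀, Valuation.mem_integer_iff, hx, hPj])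
  obtain ⟨s, hs, hPiu⟩ := exists_aeval_update_eq_taylor ν.integer hA hvν j huν (P i)
  have hvj : v j = u₀ := Function.update_self ..
  have hPiv : aeval v (P i) = aeval (Function.update x j u₀) (P i) := by
    rw [hv, Function.update_comm hij, aeval_update_of_notMem_vars _ _ hdep]
  set d := aeval v (pderiv j (P i))
  have hdν : d ∈ ν.integer := aeval_mem_subring _ hA hvν _
  refine ⟨c * d, mul_mem hcE (aeval_mem_subring E.toSubring hAE hvE _), ν.integer.mul_mem hc hdν,
    r * d + (c + z * r) ^ 2 * s, ν.integer.add_mem (ν.integer.mul_mem hr hdν) (ν.integer.mul_mem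
      (pow_mem (ν.integer.add_mem hc (ν.integer.mul_mem hzν hr)) 2) hs), ?_⟩
  rw [hx₂, ← Function.update_idem u₀, ← hv, hPiu, hPiv, hvj, hu]
  ring

variable (hPi₀ : aeval x (P i) ≠ 0)
  (hkey : ν (aeval (Function.update x j (aeval (Function.update x i 0) (P j) / x j)) (P i)) =
    ν (aeval x (P i)))

include hPi₀ hkey

lemma exists_exchange_exchange_exchange_apply_eq :
    ∃ β ∈ E, ν β = 1 ∧ ∃ e ∈ E, ν e ≤ 1 ∧ ∃ t, ν t < 1 ∧
      exchange P i (exchange P j (exchange P i x)) i = β * x i + e + t := by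
  obtain ⟨e, heE, he, t, ht, hPix₂⟩ :=
    exists_aeval_exchange_exchange_eq ν hA hx hPi hij hPj E hAE hxE hdep
  have hPiE : aeval x (P i) ∈ E := aeval_mem_subfield_of_notMem_vars E hAE hxE hdep
  have hu₀E : aeval (Function.update x i 0) (P j) / x j ∈ E := div_mem
    (aeval_mem_subring E.toSubring hAE (fun k ↦ update_mem (hxE k) (zero_mem E)) _) (hxE j hij.symm)
  have hPiu₀E := aeval_mem_subfield_of_notMem_vars E hAE
    (fun k hk ↦ update_mem (i := j) (fun _ ↦ hxE k hk) hu₀E) hdep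
  refine ⟨_, div_mem hPiu₀E hPiE, by rw [map_div₀, hkey, div_self ((map_ne_zero ν).2 hPi₀)],
    e, heE, he, aeval x (P i) / x i * t, ?_, ?_⟩
  · rw [map_mul, map_div₀, hx, div_one]
    exact mul_lt_one_of_lt_of_le hPi ht
  · have hxi : x i ≠ 0 := (map_ne_zero ν).1 (by simp [hx])
    have hx₂i : exchange P j (exchange P i x) i = aeval x (P i) / x i := by simp [exchange, hij]
    rw [exchange, Function.update_self, hx₂i, hPix₂]
    field_simp
    ring

lemma valuation_exchange_exchange_exchange_eq_one
    (hE : ∀ β ∈ E, ∀ e ∈ E, ν β ≤ ν (β * x i + e)) (k : σ) :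
    ν (exchange P i (exchange P j (exchange P i x)) k) = 1 := by
  obtain rfl | hki := eq_or_ne k i
  · obtain ⟨β, hβE, hβ, e, heE, he, t, ht, hw⟩ :=
      exists_exchange_exchange_exchange_apply_eq ν hA hx hPi hij hPj E hAE hxE hdep hPi₀ hkey
    have hβe : ν (β * x k + e) = 1 := by
      refine le_antisymm ?_ (hβ ▸ hE β hβE e heE)
      exact ν.map_add_le (by rw [map_mul, hβ, hx, mul_one]) he
    rw [hw, Valuation.map_add_eq_of_lt_left _ (hβe ▸ ht), hβe]
  · rw [exchange, Function.update_of_ne hki]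
    obtain rfl | hkj := eq_or_ne k j
    · exact valuation_exchange_exchange_apply_eq_one ν hA hx hPi hij hPj
    · rw [exchange, Function.update_of_ne hkj, exchange, Function.update_of_ne hki, hx]

end Valuation

end Exchange

section Variables

variable {σ A : Type*} [CommRing A] {i : σ}

lemma mem_supported_compl_singleton_iff {p : MvPolynomial σ A} :
    p ∈ supported A {i}ᶜ ↔ i ∉ p.vars := by
  rw [mem_supported, Set.subset_compl_singleton_iff, Finset.mem_coe]

lemma dvd_of_dvd_mul_X_add {q a c : MvPolynomial σ A} (hq : i ∉ q.vars) (ha : i ∉ a.vars)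
    (hc : i ∉ c.vars) (h : q ∣ a * X i + c) : q ∣ a := by
  obtain ⟨r, hr⟩ := h
  have hderiv := congrArg (pderiv i) hr
  simp only [map_add, pderiv_mul, pderiv_eq_zero_of_notMem_vars hq,
    pderiv_eq_zero_of_notMem_vars ha, pderiv_eq_zero_of_notMem_vars hc, pderiv_X_self, zero_mul,
    zero_add, mul_one, add_zero] at hderiv
  exact ⟨_, hderiv⟩

lemma notMem_vars_of_dvd [IsDomain A] {p q : MvPolynomial σ A} (hq : q ≠ 0) (hpq : p ∣ q)
    (hi : i ∉ q.vars) : i ∉ p.vars := by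
  obtain ⟨r, rfl⟩ := hpq
  rw [mem_vars_iff_degreeOf_ne_zero, not_not] at hi ⊢
  rw [degreeOf_mul_eq (left_ne_zero_of_mul hq) (right_ne_zero_of_mul hq)] at hi
  exact Nat.eq_zero_of_add_eq_zero_right hi

variable (A) (F : Type*) [Field F] [Algebra (MvPolynomial σ A) F]

/-- The field of rational functions in the variables other than `Xᵢ`. -/
def freeSubfield (i : σ) : Subfield F :=
  Subfield.closure ((supported A {i}ᶜ).toSubring.map (algebraMap (MvPolynomial σ A) F) : Set F)

variable {A F}

lemma algebraMap_mem_freeSubfield {a : MvPolynomial σ A} (ha : i ∉ a.vars) :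
    algebraMap _ F a ∈ freeSubfield A F i :=
  Subfield.subset_closure ⟨a, mem_supported_compl_singleton_iff.2 ha, rfl⟩

lemma exists_of_mem_freeSubfield {y : F} (hy : y ∈ freeSubfield A F i) :
    ∃ a b : MvPolynomial σ A, i ∉ a.vars ∧ i ∉ b.vars ∧ algebraMap _ F b ≠ 0 ∧
      y = algebraMap _ F a / algebraMap _ F b := by
  simp only [← mem_supported_compl_singleton_iff]
  rw [freeSubfield, Subfield.mem_closure_iff, Subring.closure_eq] at hy
  obtain ⟨_, ⟨a, ha, rfl⟩, _, ⟨b, hb, rfl⟩, rfl⟩ := hy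
  by_cases hb₀ : algebraMap (MvPolynomial σ A) F b = 0
  · exact ⟨0, 1, zero_mem _, one_mem _, by simp, by simp [hb₀]⟩
  · exact ⟨a, b, ha, hb, hb₀, rfl⟩

lemma primeValuation_le_mul_X_add [IsDomain A] [UniqueFactorizationMonoid A]
    [IsFractionRing (MvPolynomial σ A) F] {p : MvPolynomial σ A} (hp : Prime p) (hpi : i ∉ p.vars)
    {β e : F} (hβ : β ∈ freeSubfield A F i) (he : e ∈ freeSubfield A F i) :
    primeValuation F hp β ≤
      primeValuation F hp (β * algebraMap (MvPolynomial σ A) F (X i) + e) := by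
  obtain ⟨a, b, ha, hb, hb₀, rfl⟩ := exists_of_mem_freeSubfield hβ
  obtain ⟨c, d, hc, hd, hd₀, rfl⟩ := exists_of_mem_freeSubfield he
  have hdvd : ∀ m, p ^ m ∣ a * d * X i + c * b → p ^ m ∣ a * d := fun m ↦ by
    simp only [← mem_supported_compl_singleton_iff] at hpi ha hb hc hd
    apply dvd_of_dvd_mul_X_add <;> rw [← mem_supported_compl_singleton_iff]
    exacts [pow_mem hpi m, mul_mem ha hd, mul_mem hc hb]
  have hle := primeValuation_algebraMap_le_of_pow_dvd F hp hdvd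
  have hleft : algebraMap _ F a / algebraMap _ F b =
      algebraMap _ F (a * d) / algebraMap _ F (b * d) := by
    rw [map_mul, map_mul, mul_div_mul_right _ _ hd₀]
  have hright : algebraMap _ F a / algebraMap _ F b *
      algebraMap (MvPolynomial σ A) F (X i) + algebraMap _ F c / algebraMap _ F d =
      algebraMap _ F (a * d * X i + c * b) / algebraMap _ F (b * d) := by
    simp only [map_mul, map_add]
    field_simp
  rw [hright, hleft, map_div₀, map_div₀]
  exact div_le_div_of_nonneg_right hle zero_le

end Variables

section Laurent

variable {σ A F : Type*} [CommRing A] [Field F] [Algebra A F]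

variable (A) in
/-- The ring of Laurent polynomials with coefficients in `A` in the coordinates of a cluster. -/
def laurent (v : σ → F) : Subalgebra A F :=
  Algebra.adjoin A (Set.range v ∪ Set.range fun k ↦ (v k)⁻¹)

lemma mem_laurent_iff {v : σ → F} {y : F} :
    y ∈ laurent A v ↔ y ∈ Subring.closure
      (Set.range (algebraMap A F) ∪ Set.range v ∪ Set.range fun k ↦ (v k)⁻¹) := by
  rw [laurent, ← Subalgebra.mem_toSubring, Algebra.adjoin_eq_ring_closure, Set.union_assoc]

lemma self_mem_laurent (v : σ → F) (k : σ) : v k ∈ laurent A v :=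
  Algebra.subset_adjoin (.inl ⟨k, rfl⟩)

lemma inv_mem_laurent (v : σ → F) (k : σ) : (v k)⁻¹ ∈ laurent A v :=
  Algebra.subset_adjoin (.inr ⟨k, rfl⟩)

lemma aeval_mem_laurent (v : σ → F) (p : MvPolynomial σ A) : aeval v p ∈ laurent A v :=
  aeval_mem_subring (laurent A v).toSubring (laurent A v).algebraMap_mem (self_mem_laurent v) p

lemma valuation_le_one_of_mem_laurent {Γ₀ : Type*} [LinearOrderedCommGroupWithZero Γ₀]
    (ν : Valuation F Γ₀) (hA : ∀ a, ν (algebraMap A F a) ≤ 1) {v : σ → F} (hv : ∀ k, ν (v k) = 1)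
    {y : F} (hy : y ∈ laurent A v) : ν y ≤ 1 := by
  induction hy using Algebra.adjoin_induction with
  | mem y hy =>
    obtain ⟨k, rfl⟩ | ⟨k, rfl⟩ := hy
    · exact (hv k).le
    · simp [hv]
  | algebraMap a => exact hA a
  | add y z _ _ hy hz => exact ν.map_add_le hy hz
  | mul y z _ _ hy hz => exact ν.integer.mul_mem hy hz

lemma map_mem_laurent (f : F →ₐ[A] F) {v : σ → F} {y : F} (hy : y ∈ laurent A v) :
    f y ∈ laurent A (f ∘ v) := by
  have hfy : f y ∈ (laurent A v).map f := ⟨y, hy, rfl⟩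
  rw [laurent, AlgHom.map_adjoin, Set.image_union, ← Set.range_comp, ← Set.range_comp] at hfy
  simpa [laurent, Function.comp_def] using hfy

end Laurent

section InitialCluster

variable {σ A F : Type*} [CommRing A] [Field F] [Algebra (MvPolynomial σ A) F]

variable (σ A F) in
/-- The variables `x₁, …, xₙ`, as elements of the field of rational functions. -/
noncomputable def initialCluster (k : σ) : F := algebraMap (MvPolynomial σ A) F (X k)

lemma primeValuation_initialCluster [IsDomain A] [UniqueFactorizationMonoid A]
    [IsFractionRing (MvPolynomial σ A) F] {p : MvPolynomial σ A} (hp : Prime p)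
    (hpX : ∀ k, ¬ p ∣ X k) (k : σ) : primeValuation F hp (initialCluster σ A F k) = 1 :=
  (primeValuation_algebraMap_eq_one_iff F hp).2 (hpX k)

variable [Algebra A F] [IsScalarTower A (MvPolynomial σ A) F]

lemma primeValuation_algebraMap_coeff_le_one [IsDomain A] [UniqueFactorizationMonoid A]
    [IsFractionRing (MvPolynomial σ A) F] {p : MvPolynomial σ A} (hp : Prime p) (a : A) :
    primeValuation F hp (algebraMap A F a) ≤ 1 := by
  rw [IsScalarTower.algebraMap_apply A (MvPolynomial σ A) F]
  exact primeValuation_algebraMap_le_one F hp _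

lemma aeval_initialCluster (p : MvPolynomial σ A) :
    aeval (initialCluster σ A F) p = algebraMap _ F p := by
  rw [← aeval_X_left_apply p, ← aeval_algebraMap_apply, aeval_X_left_apply]
  rfl

variable (σ A F) in
lemma algebraicIndependent_initialCluster [FaithfulSMul (MvPolynomial σ A) F] :
    AlgebraicIndependent A (initialCluster σ A F) := by
  intro p q hpq
  rw [aeval_initialCluster, aeval_initialCluster] at hpq
  exact FaithfulSMul.algebraMap_injective _ F hpq

lemma exists_comp_initialCluster_eq [IsFractionRing (MvPolynomial σ A) F]
    {v : σ → F} (hv : AlgebraicIndependent A v) :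
    ∃ f : F →ₐ[A] F, f ∘ initialCluster σ A F = v := by
  refine ⟨IsFractionRing.liftAlgHom (K := F) hv, funext fun k ↦ ?_⟩
  exact (IsFractionRing.lift_algebraMap hv (X k)).trans (aeval_X v k)

lemma inv_algebraMap_mem_laurent [Nontrivial A] [FaithfulSMul (MvPolynomial σ A) F]
    {p : MvPolynomial σ A} {k : σ} (hk : p ∣ X k) :
    (algebraMap _ F p)⁻¹ ∈ laurent A (initialCluster σ A F) := by
  obtain ⟨q, hq⟩ := hk
  have hX : initialCluster σ A F k = algebraMap _ F p * algebraMap _ F q := by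
    rw [initialCluster, hq, map_mul]
  have hX₀ : algebraMap _ F p * algebraMap _ F q ≠ 0 :=
    hX ▸ (algebraicIndependent_initialCluster σ A F).ne_zero k
  rw [← mul_div_cancel_right₀ (algebraMap _ F p)⁻¹ (right_ne_zero_of_mul hX₀), div_eq_mul_inv,
    mul_right_comm, ← mul_inv, ← hX, ← aeval_initialCluster]
  exact mul_mem (inv_mem_laurent _ k) (aeval_mem_laurent _ q)

end InitialCluster

section ExchangePattern

variable {σ A F : Type*} [DecidableEq σ] [CommRing A] [Field F] [Algebra A F]
  [Algebra (MvPolynomial σ A) F]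

variable (F) in
/-- Compatibility of the exchange polynomials `Pᵢ`: they are nonzero, `Pᵢ` is free of `xᵢ`, and
conditions (2) and (3) on the specializations `P_{ji} = setZero i (P j)` hold. -/
structure IsExchangePattern (P : σ → MvPolynomial σ A) : Prop where
  ne_zero (i : σ) : P i ≠ 0
  notMem_vars (i : σ) : i ∉ (P i).vars
  isRelPrime_setZero {i j : σ} (hij : i ≠ j) : IsRelPrime (setZero i (P j)) (P i)
  exists_laurentMonomial {i j : σ} (hij : i ≠ j) : ∃ (b : ℕ) (c : A) (e : σ →₀ ℤ),
    IsRelPrime (C c) (P i) ∧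
      (algebraMap A F c * e.prod fun k m ↦ initialCluster σ A F k ^ m) *
          algebraMap _ F (setZero i (P j)) ^ b * algebraMap _ F (P i) =
        aeval (Function.update (initialCluster σ A F) j
          (algebraMap _ F (setZero i (P j)) / initialCluster σ A F j)) (P i)

variable [IsDomain A] [UniqueFactorizationMonoid A] [IsFractionRing (MvPolynomial σ A) F]
  {P : σ → MvPolynomial σ A} {p : MvPolynomial σ A}
  (hp : Prime p) {i j : σ}

namespace IsExchangePattern

lemma primeValuation_setZero (hP : IsExchangePattern F P) (hij : i ≠ j) (hpP : p ∣ P i) :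
    primeValuation F hp (algebraMap _ F (setZero i (P j))) = 1 :=
  (primeValuation_algebraMap_eq_one_iff F hp).2 fun h ↦
    hp.not_isUnit (hP.isRelPrime_setZero hij h hpP)

variable [IsScalarTower A (MvPolynomial σ A) F]

lemma primeValuation_aeval_update (hP : IsExchangePattern F P) (hij : i ≠ j) (hpP : p ∣ P i)
    (hpX : ∀ k, ¬ p ∣ X k) :
    primeValuation F hp (aeval (Function.update (initialCluster σ A F) j
        (algebraMap _ F (setZero i (P j)) / initialCluster σ A F j)) (P i)) =
      primeValuation F hp (algebraMap _ F (P i)) := by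
  obtain ⟨b, c, e, hc, h⟩ := hP.exists_laurentMonomial hij
  have hcν : primeValuation F hp (algebraMap A F c) = 1 := by
    rw [IsScalarTower.algebraMap_apply A (MvPolynomial σ A) F, algebraMap_eq,
      primeValuation_algebraMap_eq_one_iff]
    exact fun h ↦ hp.not_isUnit (hc h hpP)
  rw [← h, map_mul, map_mul, map_mul, hcν, map_pow, hP.primeValuation_setZero hp hij hpP,
    map_finsuppProd]
  simp [primeValuation_initialCluster hp hpX]

lemma primeValuation_exchange_exchange_exchange (hP : IsExchangePattern F P) (hij : i ≠ j)
    (hpP : p ∣ P i) (hpX : ∀ k, ¬ p ∣ X k) (k : σ) :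
    primeValuation F hp
      (exchange P i (exchange P j (exchange P i (initialCluster σ A F))) k) = 1 := by
  have hdep := hP.notMem_vars i
  refine valuation_exchange_exchange_exchange_eq_one _ (primeValuation_algebraMap_coeff_le_one hp)
    (primeValuation_initialCluster hp hpX) ?_ hij ?_ (freeSubfield A F i) (fun a ↦ ?_)
    (fun k hk ↦ algebraMap_mem_freeSubfield ?_) hdep ?_ ?_ (fun β hβ e he ↦ ?_) k
  · rwa [aeval_initialCluster, primeValuation_algebraMap_lt_one_iff]
  · rw [← aeval_setZero, aeval_initialCluster, hP.primeValuation_setZero hp hij hpP]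
  · rw [IsScalarTower.algebraMap_apply A (MvPolynomial σ A) F]
    exact algebraMap_mem_freeSubfield (by simp [algebraMap_eq])
  · simpa using hk.symm
  · rw [aeval_initialCluster, Ne, FaithfulSMul.algebraMap_eq_zero_iff]
    exact hP.ne_zero i
  · rw [← aeval_setZero, aeval_initialCluster, aeval_initialCluster,
      hP.primeValuation_aeval_update hp hij hpP hpX]
  · exact primeValuation_le_mul_X_add hp (notMem_vars_of_dvd (hP.ne_zero i) hpP hdep) hβ he

lemma mem_laurent_of_mem_laurent_exchange (hP : IsExchangePattern F P) (hij : i ≠ j) {y : F}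
    (hy₁ : y ∈ laurent A (exchange P i (initialCluster σ A F)))
    (hy₃ : y ∈ laurent A
      (exchange P i (exchange P j (exchange P i (initialCluster σ A F))))) :
    y ∈ laurent A (initialCluster σ A F) := by
  refine mem_subring_of_forall_prime (R := MvPolynomial σ A)
    (laurent A (initialCluster σ A F)).toSubring (fun r ↦ ?_) fun p hp ↦ ?_
  · rw [← aeval_initialCluster]
    exact aeval_mem_laurent _ r
  by_cases! hpX : ∃ k, p ∣ X k
  · obtain ⟨k, hk⟩ := hpX
    exact .inr (inv_algebraMap_mem_laurent hk)
  left
  rw [← ValuationSubring.valuation_le_one_iff]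
  have hA := primeValuation_algebraMap_coeff_le_one (F := F) hp
  by_cases hpP : p ∣ P i
  · exact valuation_le_one_of_mem_laurent _ hA
      (hP.primeValuation_exchange_exchange_exchange hp hij hpP hpX) hy₃
  · refine valuation_le_one_of_mem_laurent _ hA (valuation_exchange_eq_one _
      (primeValuation_initialCluster hp hpX) ?_) hy₁
    rwa [aeval_initialCluster, primeValuation_algebraMap_eq_one_iff]

end IsExchangePattern

end ExchangePattern

section Composition

variable {σ A F : Type*} [DecidableEq σ] [CommRing A] [Field F] [Algebra A F]
  {P : σ → MvPolynomial σ A} {v : σ → F} {i : σ}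

lemma map_exchange (f : F →ₐ[A] F) (P : σ → MvPolynomial σ A) (i : σ) (v : σ → F) :
    exchange P i (f ∘ v) = f ∘ exchange P i v := by
  ext k
  obtain rfl | hk := eq_or_ne k i
  · simp [exchange, comp_aeval_apply, Function.comp_def]
  · simp [exchange, hk]

lemma map_foldl_exchange (f : F →ₐ[A] F) (P : σ → MvPolynomial σ A) (l : List σ) (v : σ → F) :
    l.foldl (fun w i ↦ exchange P i w) (f ∘ v) = f ∘ l.foldl (fun w i ↦ exchange P i w) v := by
  induction l generalizing v with
  | nil => rfl
  | cons i l ih => rw [List.foldl_cons, List.foldl_cons, map_exchange, ih]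

lemma exchange_exchange (hP : aeval v (P i) ≠ 0) (hdep : i ∉ (P i).vars) :
    exchange P i (exchange P i v) = v := by
  rw [exchange, exchange, Function.update_self, Function.update_idem,
    aeval_update_of_notMem_vars _ _ hdep, div_div_cancel₀ hP, Function.update_eq_self]

lemma algebraicIndependent_exchange (hv : AlgebraicIndependent A v) (hP : P i ≠ 0)
    (hdep : i ∉ (P i).vars) : AlgebraicIndependent A (exchange P i v) := by
  have himage : exchange P i v '' {i}ᶜ = v '' {i}ᶜ :=
    Set.image_congr fun k hk ↦ Function.update_of_ne hk ..
  have hrestrict : (fun k : {k // k ≠ i} ↦ exchange P i v k) = fun k : {k // k ≠ i} ↦ v k :=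
    funext fun k ↦ Function.update_of_ne k.2 ..
  have hPv₀ : aeval v (P i) ≠ 0 := (map_ne_zero_iff _ hv).2 hP
  have hPv : aeval v (P i) ∈ Algebra.adjoin A (v '' {i}ᶜ) := by
    rw [← aeval_update_of_notMem_vars v 0 hdep]
    exact aeval_mem_subring (Algebra.adjoin A (v '' {i}ᶜ)).toSubring
      (Subalgebra.algebraMap_mem _) (fun k ↦ update_mem
        (fun hk ↦ Algebra.subset_adjoin (Set.mem_image_of_mem v hk)) (zero_mem _)) _
  rw [AlgebraicIndependent.iff_transcendental_adjoin_image i] at hv ⊢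
  rw [himage, hrestrict, exchange, Function.update_self]
  refine ⟨hv.1, fun halg ↦ hv.2 ?_⟩
  rw [← div_div_cancel₀ hPv₀ (b := v i), div_eq_mul_inv]
  exact (isAlgebraic_algebraMap (⟨_, hPv⟩ : Algebra.adjoin A (v '' {i}ᶜ))).mul halg.inv

lemma exchange_mem_laurent (P : σ → MvPolynomial σ A) (i : σ) (v : σ → F) (k : σ) :
    exchange P i v k ∈ laurent A v :=
  update_mem (fun _ ↦ self_mem_laurent v k)
    (div_eq_mul_inv (aeval v (P i)) (v i) ▸
      mul_mem (aeval_mem_laurent v (P i)) (inv_mem_laurent v i))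

variable [IsDomain A] [UniqueFactorizationMonoid A] [Algebra (MvPolynomial σ A) F]
  [IsScalarTower A (MvPolynomial σ A) F] [IsFractionRing (MvPolynomial σ A) F]

namespace IsExchangePattern

theorem foldl_exchange_mem_laurent (hP : IsExchangePattern F P) (l : List σ) (v : σ → F)
    (hv : AlgebraicIndependent A v) (k : σ) :
    l.foldl (fun w i ↦ exchange P i w) v k ∈ laurent A v := by
  obtain ⟨f, rfl⟩ := exists_comp_initialCluster_eq hv
  rw [map_foldl_exchange]
  refine map_mem_laurent f ?_
  have hexchange {i : σ} {w : σ → F} (hw : AlgebraicIndependent A w) :=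
    algebraicIndependent_exchange hw (hP.ne_zero i) (hP.notMem_vars i)
  have hinvol {i : σ} {w : σ → F} (hw : AlgebraicIndependent A w) :=
    exchange_exchange ((map_ne_zero_iff _ hw).2 (hP.ne_zero i)) (hP.notMem_vars i)
  have hx := algebraicIndependent_initialCluster σ A F
  match l with
  | [] => exact self_mem_laurent _ k
  | [i] => exact exchange_mem_laurent P i _ k
  | i :: j :: l =>
    rw [List.foldl_cons, List.foldl_cons]
    obtain rfl | hij := eq_or_ne i j
    · rw [hinvol hx]
      exact foldl_exchange_mem_laurent hP l _ hx k
    · refine hP.mem_laurent_of_mem_laurent_exchange hij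
        (foldl_exchange_mem_laurent hP (j :: l) _ (hexchange hx) k) ?_
      have h := foldl_exchange_mem_laurent hP (i :: l) _
        (hexchange (i := i) (hexchange (i := j) (hexchange (i := i) hx))) k
      rwa [List.foldl_cons, hinvol (hexchange (hexchange hx))] at h
termination_by l.length

end IsExchangePattern

end Composition

theorem homogeneous_exchange_pattern_laurent_general {σ A F : Type*} [DecidableEq σ] [CommRing A]
    [IsDomain A] [UniqueFactorizationMonoid A] [Field F] [Algebra A F]
    [Algebra (MvPolynomial σ A) F] [IsScalarTower A (MvPolynomial σ A) F]
    [IsFractionRing (MvPolynomial σ A) F] {P : σ → MvPolynomial σ A}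
    (hP : IsExchangePattern F P) (l : List σ) (k : σ) :
    l.foldr (exchange P) (initialCluster σ A F) k ∈ laurent A (initialCluster σ A F) := by
  rw [List.foldr_eq_foldl_reverse]
  exact hP.foldl_exchange_mem_laurent _ _ (algebraicIndependent_initialCluster σ A F) k

/-- Corollary 5.1 of Fomin–Zelevinsky "The Laurent phenomenon"
(homogeneous exchange patterns): if the exchange polynomials P₁,…,Pₙ over a
UFD A satisfy the three compatibility conditions, then every finite
composition of the exchange maps Fᵢ : xᵢ ↦ Pᵢ/xᵢ is given coordinatewise by
Laurent polynomials in x₁,…,xₙ with coefficients in A. -/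
theorem homogeneous_exchange_pattern_laurent
    (A : Type*) [CommRing A] [IsDomain A] [UniqueFactorizationMonoid A]
    (n : ℕ)
    (F : Type*) [Field F] [Algebra (MvPolynomial (Fin n) A) F]
    [IsFractionRing (MvPolynomial (Fin n) A) F]
    (φ : A →+* F)
    (hφ : φ = (algebraMap (MvPolynomial (Fin n) A) F).comp
      (C : A →+* MvPolynomial (Fin n) A))
    (x : Fin n → F) (hx : ∀ i, x i = algebraMap (MvPolynomial (Fin n) A) F (X i))
    (P : Fin n → MvPolynomial (Fin n) A)
    (hPne : ∀ k, P k ≠ 0)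
    -- (1) each Pₖ does not depend on xₖ and is not divisible by any xᵢ
    (hdep : ∀ k, k ∉ (P k).vars)
    (hdiv : ∀ k i, ¬ (X i ∣ P k))
    -- P j with xᵢ set to zero
    (Psub : Fin n → Fin n → MvPolynomial (Fin n) A)
    (hPsub : ∀ j i, Psub j i =
      aeval (fun k => if k = i then 0 else X k) (P j))
    -- (2) coprimality of P_{ji} and Pᵢ
    (hcop : ∀ i j, i ≠ j → ∀ d : MvPolynomial (Fin n) A,
      d ∣ Psub j i → d ∣ P i → IsUnit d)
    -- (3) the key substitution identity, with a Laurent monomial L = cL·∏ xᵏ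
    (hkey : ∀ i j, i ≠ j → ∃ (b : ℕ) (cL : A) (eL : Fin n → ℤ),
      (∀ d : MvPolynomial (Fin n) A, d ∣ C cL → d ∣ P i → IsUnit d) ∧
      (φ cL * ∏ k, x k ^ eL k) * (eval₂ φ x (Psub j i)) ^ b * eval₂ φ x (P i)
        = eval₂ φ (Function.update x j (eval₂ φ x (Psub j i) / x j)) (P i))
    -- the exchange maps
    (step : Fin n → (Fin n → F) → (Fin n → F))
    (hstep : ∀ (i : Fin n) (v : Fin n → F),
      step i v = Function.update v i (eval₂ φ v (P i) / v i)) :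
    ∀ (l : List (Fin n)) (j : Fin n),
      (l.foldr step x) j ∈ Subring.closure
        (Set.range φ ∪ Set.range x ∪ Set.range (fun i => (x i)⁻¹)) := by
  let := φ.toAlgebra
  have : IsScalarTower A (MvPolynomial (Fin n) A) F := .of_algebraMap_eq' hφ
  obtain rfl : x = initialCluster (Fin n) A F := funext hx
  obtain rfl : step = exchange P := funext₂ hstep
  obtain rfl : Psub = fun j i ↦ setZero i (P j) := funext₂ hPsub
  have hP : IsExchangePattern F P := by
    refine ⟨hPne, hdep, hcop _ _, fun {i j} hij ↦ ?_⟩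
    obtain ⟨b, c, e, hc, h⟩ := hkey i j hij
    refine ⟨b, c, Finsupp.equivFunOnFinite.symm e, hc, ?_⟩
    rw [Finsupp.prod_fintype _ _ (by simp), ← aeval_initialCluster, ← aeval_initialCluster]
    exact h
  exact fun l k ↦ mem_laurent_iff.1 (homogeneous_exchange_pattern_laurent_general hP l k)
end
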